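/- arXiv:1609.08743 — 2 statements merged into one kernel-verified Lean document; each statement's English description precedes it below -/
import Mathlib

section
/- Let a₀ ∈ (0,1) be the minimal root of 4a(2−a)(1−a)²(a²−2a+2)² = 1. Let a ∈ [a₀, 1), let c, d > 0 with 0 < c/d ≤ ((a−1)² + 1)/(2(a−1)² + 1), and let δ₂ = (√(c/d) − 1)(1−a). Then for all x ∈ (0,1) and all δ ∈ (a−1, δ₂], F(a−1, 1−a; 1; 1−x^c) + C₃(δ)(1−x^c) < F(a−1−δ, 1−a+δ; 1; 1−x^d) < F(a−1, 1−a; 1; 1−x^c) + C₄(δ)(1−x^c), where C₃(δ) = −(d/c)·(δ² + 2(1−a)δ + (1−a)²(1 − c/d)) and C₄(δ) = (1/π)·[sin(π(a−δ))/(1−a+δ) − sin(πa)/(1−a)]. -/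
open Real Set Filter Topology

/-- The Gaussian hypergeometric function `F(a,b;c;x)`, defined as a power series
with Pochhammer (shifted factorial) coefficients. -/
noncomputable def hyp (a b c x : ℝ) : ℝ :=
  ∑' n : ℕ, ((∏ i ∈ Finset.range n, (a + i)) * (∏ i ∈ Finset.range n, (b + i)) /
    ((∏ i ∈ Finset.range n, (c + i)) * (Nat.factorial n))) * x ^ n

/-!
Write `p = 1 - a`, `q = 1 - a + δ`, `k = d / c` and `t = x ^ c`. The difference
`f t = F(-q, q; 1; 1 - t ^ k) - F(-p, p; 1; 1 - t)` vanishes at `t = 1`. It is strictly convex on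
`[0, 1]`, so on `(0, 1)` it lies strictly above its tangent at `1` and strictly below its chord;
these two lines are the two bounds.

For the convexity, let `φ_p t = t F(1 - p, 1 + p; 3; 1 - t)`. The sign of `t ^ 2 f'' t` is decided
by a comparison of `φ_q (t ^ k)` with `φ_p t` and by `k q² (2 - k - k q²) ≤ p² (1 - p²)`, and it is
the latter inequality whose validity is governed by the root `a₀`. The former is
`φ_q (t ^ k) ≤ φ_0 (t ^ k) ≤ φ_p t`, whose second half compares logarithmic derivatives by means of
Chebyshev's sum inequality for power series.
-/

theorem abs_lt_of_mem_Ico {α : Type*} [AddCommGroup α] [LinearOrder α] [IsOrderedAddMonoid α]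
    {x r : α} (hx : x ∈ Ico 0 r) : |x| < r := by
  rw [abs_of_nonneg hx.1]
  exact hx.2

theorem one_sub_mem_Ico {t : ℝ} (ht : t ∈ Ioc 0 1) : 1 - t ∈ Ico 0 1 :=
  ⟨sub_nonneg.2 ht.2, sub_lt_self 1 ht.1⟩

theorem rpow_mem_Ioc {t k : ℝ} (hk : 0 ≤ k) (ht : t ∈ Ioc 0 1) : t ^ k ∈ Ioc 0 1 :=
  ⟨rpow_pos_of_pos ht.1 k, rpow_le_one ht.1.le ht.2 hk⟩

theorem hasDerivAt_tsum_mul_pow {𝕜 : Type*} [NontriviallyNormedField 𝕜] [CompleteSpace 𝕜]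
    {a : ℕ → 𝕜} {x : 𝕜} (hx : ‖x‖ₑ < (FormalMultilinearSeries.ofScalars 𝕜 a).radius) :
    HasDerivAt (fun y ↦ ∑' n, a n * y ^ n) (∑' n : ℕ, (n + 1) * a (n + 1) * x ^ n) x := by
  have hf := (FormalMultilinearSeries.ofScalars 𝕜 a).hasFPowerSeriesOnBall (pos_of_gt hx)
  have hsum : (FormalMultilinearSeries.ofScalars 𝕜 a).sum = fun y ↦ ∑' n, a n * y ^ n :=
    FormalMultilinearSeries.ofScalarsSum_eq_tsum a
  rw [hsum] at hf
  have hmem : x ∈ Metric.eball (0 : 𝕜) (FormalMultilinearSeries.ofScalars 𝕜 a).radius := by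
    simpa using hx
  have hderiv := (hf.fderiv.hasSum hmem).mapL (ContinuousLinearMap.apply 𝕜 𝕜 (1 : 𝕜))
  have hcoeff (n : ℕ) : (FormalMultilinearSeries.ofScalars 𝕜 a).derivSeries n (fun _ ↦ x) 1 =
      (n + 1) * a (n + 1) * x ^ n := by
    rw [FormalMultilinearSeries.apply_eq_pow_smul_coeff, smul_apply,
      FormalMultilinearSeries.derivSeries_coeff_one, FormalMultilinearSeries.coeff_ofScalars,
      smul_eq_mul, nsmul_eq_mul, Nat.cast_succ, mul_comm]
  simp only [ContinuousLinearMap.apply_apply, hcoeff, zero_add,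
    fderiv_apply_one_eq_deriv] at hderiv
  rw [hderiv.tsum_eq]
  exact (hf.differentiableOn.differentiableAt (Metric.isOpen_eball.mem_nhds hmem)).hasDerivAt

theorem tsum_mul_tsum_le_of_monovary {ι : Type*} {w f g : ι → ℝ} (hw : ∀ i, 0 ≤ w i)
    (hfg : Monovary f g) (hs : Summable w) (hsf : Summable fun i ↦ w i * f i)
    (hsg : Summable fun i ↦ w i * g i) (hsfg : Summable fun i ↦ w i * f i * g i) :
    (∑' i, w i * f i) * (∑' i, w i * g i) ≤ (∑' i, w i * f i * g i) * ∑' i, w i := by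
  refine le_of_tendsto_of_tendsto' (Tendsto.mul hsf.hasSum hsg.hasSum)
    (Tendsto.mul hsfg.hasSum hs.hasSum) fun s ↦ ?_
  have pairs_nonneg : 0 ≤ ∑ i ∈ s, ∑ j ∈ s, w i * w j * ((f j - f i) * (g j - g i)) :=
    Finset.sum_nonneg fun i _ ↦ Finset.sum_nonneg fun j _ ↦
      mul_nonneg (mul_nonneg (hw i) (hw j)) (hfg.sub_mul_sub_nonneg i j)
  have pairs_eq : ∑ i ∈ s, ∑ j ∈ s, w i * w j * ((f j - f i) * (g j - g i)) =
      2 * ((∑ i ∈ s, w i * f i * g i) * ∑ j ∈ s, w j -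
        (∑ i ∈ s, w i * f i) * ∑ j ∈ s, w j * g j) := by
    have expand (i j : ι) : w i * w j * ((f j - f i) * (g j - g i)) =
        w i * f i * g i * w j + w i * (w j * f j * g j)
          - w i * f i * (w j * g j) - w i * g i * (w j * f j) := by ring
    simp only [expand, Finset.sum_sub_distrib, Finset.sum_add_distrib, ← Finset.sum_mul_sum]
    ring
  linarith

theorem tsum_mul_tsum_le_of_antivary {ι : Type*} {w f g : ι → ℝ} (hw : ∀ i, 0 ≤ w i)
    (hfg : Antivary f g) (hs : Summable w) (hsf : Summable fun i ↦ w i * f i)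
    (hsg : Summable fun i ↦ w i * g i) (hsfg : Summable fun i ↦ w i * f i * g i) :
    (∑' i, w i * f i * g i) * ∑' i, w i ≤ (∑' i, w i * f i) * (∑' i, w i * g i) := by
  have h := tsum_mul_tsum_le_of_monovary hw hfg.neg_right hs hsf
    (by simpa using hsg.neg) (by simpa using hsfg.neg)
  simp only [Pi.neg_apply, mul_neg, tsum_neg, neg_mul] at h
  exact neg_le_neg_iff.1 h

theorem tsum_mul_pow_mul_tsum_pow_le_of_monotone {a θ : ℕ → ℝ} {x y : ℝ} (ha : ∀ n, 0 ≤ a n)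
    (hθ : Monotone θ) (hx : 0 < x) (hxy : x ≤ y) (hsx : Summable fun n ↦ a n * x ^ n)
    (hsy : Summable fun n ↦ a n * y ^ n) (hsθx : Summable fun n ↦ a n * θ n * x ^ n)
    (hsθy : Summable fun n ↦ a n * θ n * y ^ n) :
    (∑' n, a n * θ n * x ^ n) * (∑' n, a n * y ^ n) ≤
      (∑' n, a n * θ n * y ^ n) * ∑' n, a n * x ^ n := by
  have hpow (n : ℕ) : x ^ n * (y / x) ^ n = y ^ n := by
    rw [← mul_pow, mul_div_cancel₀ _ hx.ne']
  have e₁ (n : ℕ) : a n * x ^ n * θ n = a n * θ n * x ^ n := by ring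
  have e₂ (n : ℕ) : a n * x ^ n * (y / x) ^ n = a n * y ^ n := by rw [mul_assoc, hpow]
  have e₃ (n : ℕ) : a n * θ n * x ^ n * (y / x) ^ n = a n * θ n * y ^ n := by rw [mul_assoc, hpow]
  have h := tsum_mul_tsum_le_of_monovary (w := fun n ↦ a n * x ^ n) (f := θ)
    (g := fun n ↦ (y / x) ^ n) (fun n ↦ mul_nonneg (ha n) (pow_nonneg hx.le n))
    (hθ.monovary (pow_right_mono₀ ((one_le_div hx).2 hxy)))
  simp only [e₁, e₂, e₃] at h
  exact h hsx hsθx hsy hsθy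

/-- The coefficient of `x ^ n` in `hyp a b c x`. -/
noncomputable def hypCoeff (a b c : ℝ) (n : ℕ) : ℝ :=
  (∏ i ∈ Finset.range n, (a + i)) * (∏ i ∈ Finset.range n, (b + i)) /
    ((∏ i ∈ Finset.range n, (c + i)) * n.factorial)

section Coefficients

variable (a b c : ℝ) (n : ℕ)

theorem hyp_eq_tsum (x : ℝ) : hyp a b c x = ∑' n, hypCoeff a b c n * x ^ n := rfl

@[simp]
theorem hypCoeff_zero : hypCoeff a b c 0 = 1 := by simp [hypCoeff]

theorem hypCoeff_succ :
    hypCoeff a b c (n + 1) = hypCoeff a b c n * ((a + n) * (b + n) / ((c + n) * (n + 1))) := by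
  simp only [hypCoeff, Finset.prod_range_succ, Nat.factorial_succ, Nat.cast_mul, Nat.cast_succ,
    div_mul_div_comm]
  congr 1 <;> ring

theorem succ_mul_hypCoeff_succ :
    (n + 1) * hypCoeff a b c (n + 1) = a * b / c * hypCoeff (a + 1) (b + 1) (c + 1) n := by
  have hprod (r : ℝ) :
      ∏ i ∈ Finset.range (n + 1), (r + i) = r * ∏ i ∈ Finset.range n, (r + 1 + i) := by
    rw [Finset.prod_range_succ', mul_comm]
    simp [add_right_comm, add_assoc]
  simp only [hypCoeff, hprod, Nat.factorial_succ, Nat.cast_mul, Nat.cast_succ]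
  field_simp

theorem hypCoeff_succ_eq_hypCoeff_add_one :
    hypCoeff a b c (n + 1) =
      hypCoeff (a + 1) (b + 1) c n * (a * b / ((c + n) * (n + 1))) := by
  induction n with
  | zero => simp [hypCoeff]
  | succ n ih =>
    rw [hypCoeff_succ, ih, hypCoeff_succ (a + 1)]
    push_cast
    simp only [div_eq_mul_inv, mul_inv]
    ring

theorem hypCoeff_add_one_succ_sub (h : ∀ n : ℕ, a + b + 1 + n ≠ 0) :
    hypCoeff (a + 1) (b + 1) (a + b + 1) (n + 1) - hypCoeff (a + 1) (b + 1) (a + b + 1) n =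
      hypCoeff a b (a + b + 1) (n + 1) := by
  have hn := h n
  rw [hypCoeff_succ_eq_hypCoeff_add_one a, hypCoeff_succ (a + 1)]
  field_simp
  ring

theorem sum_range_hypCoeff (h : ∀ n : ℕ, a + b + 1 + n ≠ 0) :
    ∑ i ∈ Finset.range (n + 1), hypCoeff a b (a + b + 1) i =
      hypCoeff (a + 1) (b + 1) (a + b + 1) n := by
  induction n with
  | zero => simp
  | succ n ih =>
    rw [Finset.sum_range_succ, ih, ← hypCoeff_add_one_succ_sub a b n h, add_sub_cancel]

theorem hypCoeff_eq_mul : hypCoeff a b c n = hypCoeff a b 1 n * hypCoeff 1 1 c n := by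
  have hprod : ∏ i ∈ Finset.range n, ((1 : ℝ) + i) = n.factorial := by
    rw [← Finset.prod_range_add_one_eq_factorial]
    push_cast
    exact Finset.prod_congr rfl fun i _ ↦ add_comm _ _
  simp only [hypCoeff, hprod]
  field_simp

variable {a b c}

theorem hypCoeff_pos (ha : 0 < a) (hb : 0 < b) (hc : 0 < c) : 0 < hypCoeff a b c n := by
  have hprod {r : ℝ} (hr : 0 < r) : 0 < ∏ i ∈ Finset.range n, (r + i) :=
    Finset.prod_pos fun i _ ↦ by positivity
  exact div_pos (mul_pos (hprod ha) (hprod hb)) (mul_pos (hprod hc) (by positivity))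

end Coefficients

section PowerSeries

variable (a b c : ℝ) {x : ℝ}

theorem hypCoeff_eq_ordinaryHypergeometricCoefficient (n : ℕ) :
    hypCoeff a b c n = ordinaryHypergeometricCoefficient a b c n := by
  have hprod (r : ℝ) : ∏ i ∈ Finset.range n, (r + i) = (ascPochhammer ℝ n).eval r := by
    induction n with
    | zero => simp
    | succ n ih => rw [Finset.prod_range_succ, ih, ascPochhammer_succ_eval]
  simp only [hypCoeff, hprod, ordinaryHypergeometricCoefficient]
  field_simp

theorem one_le_radius_ordinaryHypergeometricSeries :
    1 ≤ (ordinaryHypergeometricSeries ℝ a b c).radius := by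
  by_cases h : ∀ k : ℕ, (k : ℝ) ≠ -a ∧ (k : ℝ) ≠ -b ∧ (k : ℝ) ≠ -c
  · exact (ordinaryHypergeometricSeries_radius_eq_one ℝ a b c h).ge
  · suffices (ordinaryHypergeometricSeries ℝ a b c).radius = ⊤ by simp [this]
    obtain ⟨k, hk⟩ := not_forall.1 h
    have hk' : a = -k ∨ b = -k ∨ c = -k := by
      simpa only [not_and_or, not_not, eq_neg_iff_add_eq_zero, add_comm] using hk
    obtain rfl | rfl | rfl := hk'
    exacts [ordinaryHypergeometric_radius_top_of_neg_nat₁ ℝ b c,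
      ordinaryHypergeometric_radius_top_of_neg_nat₂ ℝ a c,
      ordinaryHypergeometric_radius_top_of_neg_nat₃ ℝ a b]

theorem enorm_lt_radius_hypCoeff (hx : |x| < 1) :
    ‖x‖ₑ < (FormalMultilinearSeries.ofScalars ℝ (hypCoeff a b c)).radius := by
  rw [funext (hypCoeff_eq_ordinaryHypergeometricCoefficient a b c)]
  refine lt_of_lt_of_le ?_ (one_le_radius_ordinaryHypergeometricSeries a b c)
  rwa [← ofReal_norm, Real.norm_eq_abs, ENNReal.ofReal_lt_one]

theorem summable_hypCoeff_mul_pow (hx : |x| < 1) :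
    Summable fun n ↦ hypCoeff a b c n * x ^ n := by
  have hmem : x ∈ Metric.eball 0 (FormalMultilinearSeries.ofScalars ℝ (hypCoeff a b c)).radius := by
    simpa using enorm_lt_radius_hypCoeff a b c hx
  simpa [FormalMultilinearSeries.ofScalars_apply_eq, mul_comm] using
    (FormalMultilinearSeries.ofScalars ℝ (hypCoeff a b c)).summable hmem

theorem hasDerivAt_hyp (hx : |x| < 1) :
    HasDerivAt (hyp a b c) (a * b / c * hyp (a + 1) (b + 1) (c + 1) x) x := by
  refine (hasDerivAt_tsum_mul_pow (enorm_lt_radius_hypCoeff a b c hx)).congr_deriv ?_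
  simp only [succ_mul_hypCoeff_succ, hyp_eq_tsum, mul_assoc, tsum_mul_left]

@[simp]
theorem hyp_zero : hyp a b c 0 = 1 := by
  rw [hyp_eq_tsum, tsum_eq_single 0 fun n hn ↦ by simp [hn]]
  simp

theorem one_sub_mul_hyp_add_one (h : ∀ n : ℕ, a + b + 1 + n ≠ 0) (hx : |x| < 1) :
    (1 - x) * hyp (a + 1) (b + 1) (a + b + 1) x = hyp a b (a + b + 1) x := by
  have hsum := summable_hypCoeff_mul_pow (a + 1) (b + 1) (a + b + 1) hx
  have shifted : Summable fun n ↦ hypCoeff (a + 1) (b + 1) (a + b + 1) (n + 1) * x ^ (n + 1) :=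
    (summable_nat_add_iff 1).2 hsum
  calc (1 - x) * hyp (a + 1) (b + 1) (a + b + 1) x
      = 1 + ∑' n, (hypCoeff (a + 1) (b + 1) (a + b + 1) (n + 1) * x ^ (n + 1) -
          x * (hypCoeff (a + 1) (b + 1) (a + b + 1) n * x ^ n)) := by
        rw [shifted.tsum_sub (hsum.mul_left x), tsum_mul_left, hyp_eq_tsum, sub_mul, one_mul]
        nth_rw 1 [hsum.tsum_eq_zero_add]
        simp [add_sub_assoc]
    _ = 1 + ∑' n, hypCoeff a b (a + b + 1) (n + 1) * x ^ (n + 1) := by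
        congr 2 with n
        rw [← hypCoeff_add_one_succ_sub a b n h]
        ring
    _ = hyp a b (a + b + 1) x := by
        rw [hyp_eq_tsum, (summable_hypCoeff_mul_pow a b (a + b + 1) hx).tsum_eq_zero_add]
        simp

theorem hasSum_hyp_sub_one_sub_mul (hx : |x| < 1) :
    HasSum (fun n : ℕ ↦ (n + 1) * (hypCoeff a b c n - hypCoeff a b c (n + 1)) * x ^ n)
      (hyp a b c x - (1 - x) * (a * b / c * hyp (a + 1) (b + 1) (c + 1) x)) := by
  have hsum := summable_hypCoeff_mul_pow a b c hx
  have hderiv : HasSum (fun n : ℕ ↦ (n + 1) * hypCoeff a b c (n + 1) * x ^ n)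
      (a * b / c * hyp (a + 1) (b + 1) (c + 1) x) := by
    simp only [succ_mul_hypCoeff_succ, mul_assoc]
    exact ((summable_hypCoeff_mul_pow (a + 1) (b + 1) (c + 1) hx).hasSum.mul_left _)
  have hmul : HasSum (fun n : ℕ ↦ n * hypCoeff a b c n * x ^ n)
      (x * (a * b / c * hyp (a + 1) (b + 1) (c + 1) x)) := by
    rw [← hasSum_nat_add_iff' 1]
    simpa [pow_succ', mul_left_comm] using hderiv.mul_left x
  have hfinal := (hsum.hasSum.add hmul).sub hderiv
  rw [← hyp_eq_tsum, add_sub_assoc, ← sub_one_mul, ← neg_sub 1 x, neg_mul, ← sub_eq_add_neg]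
    at hfinal
  exact hfinal.congr_fun fun n ↦ by ring

end PowerSeries

section Comparison

variable {a b c x : ℝ}

theorem hypCoeff_le_hypCoeff_of_le {c' : ℝ} (ha : 0 < a) (hb : 0 < b) (hc : 0 < c) (hcc : c ≤ c')
    (n : ℕ) : hypCoeff a b c' n ≤ hypCoeff a b c n := by
  have hprod {r : ℝ} (hr : 0 < r) : 0 < ∏ i ∈ Finset.range n, (r + i) :=
    Finset.prod_pos fun i _ ↦ by positivity
  refine div_le_div_of_nonneg_left (mul_pos (hprod ha) (hprod hb)).le
    (mul_pos (hprod hc) (by positivity)) (mul_le_mul_of_nonneg_right ?_ (by positivity))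
  exact Finset.prod_le_prod (fun i _ ↦ by positivity) fun i _ ↦ by gcongr

theorem antitone_hypCoeff_one (ha : 0 < a) (hb : 0 < b) (hab : a + b ≤ 2) :
    Antitone (hypCoeff a b 1) := antitone_nat_of_succ_le fun n ↦ by
  rw [hypCoeff_succ]
  refine mul_le_of_le_one_right (hypCoeff_pos n ha hb one_pos).le ?_
  rw [div_le_one (by positivity)]
  nlinarith [sq_nonneg (a - b), mul_nonneg (sub_nonneg.2 hab) n.cast_nonneg]

theorem hyp_pos (ha : 0 < a) (hb : 0 < b) (hc : 0 < c) (hx : x ∈ Ico 0 1) : 0 < hyp a b c x :=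
  (summable_hypCoeff_mul_pow a b c (abs_lt_of_mem_Ico hx)).tsum_pos
    (fun n ↦ mul_nonneg (hypCoeff_pos n ha hb hc).le (pow_nonneg hx.1 n)) 0 (by simp)

theorem hyp_le_hyp_one_one (ha : 0 < a) (hb : 0 < b) (hab : a + b ≤ 2) (hc : 0 < c)
    (hx : x ∈ Ico 0 1) : hyp a b c x ≤ hyp 1 1 c x := by
  have hx' := abs_lt_of_mem_Ico hx
  rw [hyp_eq_tsum, hyp_eq_tsum]
  refine (summable_hypCoeff_mul_pow a b c hx').tsum_le_tsum (fun n ↦ ?_)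
    (summable_hypCoeff_mul_pow 1 1 c hx')
  have hle : hypCoeff a b 1 n ≤ 1 := by
    simpa using antitone_hypCoeff_one ha hb hab n.zero_le
  refine mul_le_mul_of_nonneg_right ?_ (pow_nonneg hx.1 n)
  rw [hypCoeff_eq_mul]
  exact mul_le_of_le_one_left (hypCoeff_pos n one_pos one_pos hc).le hle

theorem hyp_lt_hyp_of_lt {c' : ℝ} (ha : 0 < a) (hb : 0 < b) (hc : 0 < c) (hcc : c < c')
    (hx : x ∈ Ioo 0 1) : hyp a b c' x < hyp a b c x := by
  have hx' := abs_lt_of_mem_Ico ⟨hx.1.le, hx.2⟩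
  refine (summable_hypCoeff_mul_pow a b c' hx').tsum_lt_tsum (i := 1) (fun n ↦ ?_) ?_
    (summable_hypCoeff_mul_pow a b c hx')
  · exact mul_le_mul_of_nonneg_right (hypCoeff_le_hypCoeff_of_le ha hb hc hcc.le n)
      (pow_nonneg hx.1.le n)
  · refine mul_lt_mul_of_pos_right ?_ (pow_pos hx.1 1)
    simpa [hypCoeff] using div_lt_div_of_pos_left (mul_pos ha hb) hc hcc

end Comparison

/-! ### The normalised second derivative of `F(-p, p; 1; 1 - t)` -/

section NormCurv

/-- The function `t F(1 - p, 1 + p; 3; 1 - t)`. Up to the factor `- p² (1 - p²) / 2`, it is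
`t²` times the second derivative of `t ↦ F(-p, p; 1; 1 - t)`. -/
noncomputable def normCurv (p t : ℝ) : ℝ := t * hyp (1 - p) (1 + p) 3 (1 - t)

/-- The elasticity `t φ'(t) / φ(t)` of `φ = normCurv p`. -/
noncomputable def normCurvElasticity (p t : ℝ) : ℝ :=
  1 - t * ((1 - p ^ 2) / 3 * hyp (2 - p) (2 + p) 4 (1 - t)) / hyp (1 - p) (1 + p) 3 (1 - t)

@[simp]
theorem normCurv_one (p : ℝ) : normCurv p 1 = 1 := by simp [normCurv]

variable {p t : ℝ}

theorem hyp_one_sub_pos {c : ℝ} (hp : p ∈ Ico 0 1) (hc : 0 < c) (ht : t ∈ Ioc 0 1) :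
    0 < hyp (1 - p) (1 + p) c (1 - t) :=
  hyp_pos (sub_pos.2 hp.2) (by linarith [hp.1]) hc (one_sub_mem_Ico ht)

theorem normCurv_pos (hp : p ∈ Ico 0 1) (ht : t ∈ Ioc 0 1) : 0 < normCurv p t :=
  mul_pos ht.1 (hyp_one_sub_pos hp three_pos ht)

theorem normCurv_le_normCurv_zero (hp : p ∈ Ico 0 1) (ht : t ∈ Ioc 0 1) :
    normCurv p t ≤ normCurv 0 t := by
  simpa [normCurv] using mul_le_mul_of_nonneg_left (hyp_le_hyp_one_one (sub_pos.2 hp.2)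
    (by linarith [hp.1]) (by linarith) three_pos (one_sub_mem_Ico ht)) ht.1.le

theorem hasDerivAt_log_normCurv (hp : p ∈ Ico 0 1) (ht : t ∈ Ioc 0 1) :
    HasDerivAt (fun s ↦ log (normCurv p s)) (normCurvElasticity p t / t) t := by
  have hpos := hyp_one_sub_pos hp three_pos ht
  have hhyp : HasDerivAt (fun s ↦ hyp (1 - p) (1 + p) 3 (1 - s))
      (-((1 - p ^ 2) / 3 * hyp (2 - p) (2 + p) 4 (1 - t))) t :=
    ((hasDerivAt_hyp (1 - p) (1 + p) 3 (abs_lt_of_mem_Ico (one_sub_mem_Ico ht))).comp t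
      ((hasDerivAt_id t).const_sub 1)).congr_deriv (by ring_nf)
  refine (((hasDerivAt_id t).mul hhyp).log (normCurv_pos hp ht).ne').congr_deriv ?_
  simp only [normCurvElasticity, Pi.mul_apply, id_eq]
  field_simp
  ring

theorem hasSum_normCurvElasticity_mul (hp : p ∈ Ico 0 1) (ht : t ∈ Ioc 0 1) :
    HasSum (fun n : ℕ ↦
        hypCoeff (1 - p) (1 + p) 3 n * ((2 * n + 2 + p ^ 2) / (n + 3)) * (1 - t) ^ n)
      (normCurvElasticity p t * hyp (1 - p) (1 + p) 3 (1 - t)) := by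
  have hpos := hyp_one_sub_pos hp three_pos ht
  convert (hasSum_hyp_sub_one_sub_mul (1 - p) (1 + p) 3
    (abs_lt_of_mem_Ico (one_sub_mem_Ico ht))).congr_fun fun n ↦ ?_ using 1
  · rw [normCurvElasticity]
    field_simp
    ring_nf
  · rw [hypCoeff_succ]
    field_simp
    ring

theorem antitoneOn_normCurvElasticity (hp : p ∈ Ico 0 1) :
    AntitoneOn (normCurvElasticity p) (Ioo 0 1) := by
  intro s hs t ht hst
  have hs' := Ioo_subset_Ioc_self hs
  have ht' := Ioo_subset_Ioc_self ht
  have hθ : Monotone fun n : ℕ ↦ (2 * n + 2 + p ^ 2) / ((n : ℝ) + 3) :=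
    monotone_nat_of_le_succ fun n ↦ by
      push_cast
      rw [div_le_div_iff₀ (by positivity) (by positivity)]
      nlinarith [hp.1, hp.2]
  have hEs := hasSum_normCurvElasticity_mul hp hs'
  have hEt := hasSum_normCurvElasticity_mul hp ht'
  have hpos := hyp_one_sub_pos hp three_pos hs'
  have hpos' := hyp_one_sub_pos hp three_pos ht'
  have key := tsum_mul_pow_mul_tsum_pow_le_of_monotone
    (fun n ↦ (hypCoeff_pos n (sub_pos.2 hp.2) (by linarith [hp.1]) three_pos).le) hθ
    (sub_pos.2 ht.2) (sub_le_sub_left hst 1)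
    (summable_hypCoeff_mul_pow _ _ _ (abs_lt_of_mem_Ico (one_sub_mem_Ico ht')))
    (summable_hypCoeff_mul_pow _ _ _ (abs_lt_of_mem_Ico (one_sub_mem_Ico hs')))
    hEt.summable hEs.summable
  rw [hEs.tsum_eq, hEt.tsum_eq, ← hyp_eq_tsum, ← hyp_eq_tsum, mul_right_comm, mul_assoc,
    mul_assoc] at key
  exact le_of_mul_le_mul_right key (by positivity)

theorem normCurvElasticity_zero_nonneg (ht : t ∈ Ioc 0 1) : 0 ≤ normCurvElasticity 0 t := by
  have hpos := hyp_one_sub_pos (left_mem_Ico.2 one_pos) three_pos ht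
  refine nonneg_of_mul_nonneg_left ?_ hpos
  rw [← (hasSum_normCurvElasticity_mul (left_mem_Ico.2 one_pos) ht).tsum_eq]
  have hcoeff (n : ℕ) : 0 ≤ hypCoeff (1 - 0) (1 + 0) 3 n :=
    (hypCoeff_pos n (by norm_num) (by norm_num) three_pos).le
  exact tsum_nonneg fun n ↦ mul_nonneg (mul_nonneg (hcoeff n) (by positivity))
    (pow_nonneg (sub_nonneg.2 ht.2) n)

theorem summable_normCurvElasticity_zero_weight_mul (hp : p ∈ Ico 0 1) (ht : t ∈ Ioc 0 1) :
    Summable fun n : ℕ ↦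
      hypCoeff (1 - p) (1 + p) 3 n * ((2 * n + 2) / (n + 3)) * (1 - t) ^ n := by
  have hcoeff (n : ℕ) : 0 ≤ hypCoeff (1 - p) (1 + p) 3 n :=
    (hypCoeff_pos n (sub_pos.2 hp.2) (by linarith [hp.1]) three_pos).le
  have hpow (n : ℕ) : 0 ≤ (1 - t) ^ n := pow_nonneg (sub_nonneg.2 ht.2) n
  refine (hasSum_normCurvElasticity_mul hp ht).summable.of_nonneg_of_le
    (fun n ↦ mul_nonneg (mul_nonneg (hcoeff n) (by positivity)) (hpow n)) fun n ↦ ?_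
  refine mul_le_mul_of_nonneg_right (mul_le_mul_of_nonneg_left ?_ (hcoeff n)) (hpow n)
  exact div_le_div_of_nonneg_right (le_add_of_nonneg_right (sq_nonneg p)) (by positivity)

/- Chebyshev's inequality applies because passing from `0` to `p` multiplies the coefficients by the
decreasing sequence `hypCoeff (1 - p) (1 + p) 1`. -/
theorem tsum_normCurvElasticity_zero_weight_mul_le (hp : p ∈ Ico 0 1) (ht : t ∈ Ioc 0 1) :
    ∑' n : ℕ, hypCoeff (1 - p) (1 + p) 3 n * ((2 * n + 2) / (n + 3)) * (1 - t) ^ n ≤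
      normCurvElasticity 0 t * hyp (1 - p) (1 + p) 3 (1 - t) := by
  have hx := abs_lt_of_mem_Ico (one_sub_mem_Ico ht)
  have hp0 : (0 : ℝ) ∈ Ico 0 1 := left_mem_Ico.2 one_pos
  have hθ : Monotone fun n : ℕ ↦ (2 * n + 2) / ((n : ℝ) + 3) :=
    monotone_nat_of_le_succ fun n ↦ by
      push_cast
      rw [div_le_div_iff₀ (by positivity) (by positivity)]
      linarith
  have hanti := antitone_hypCoeff_one (sub_pos.2 hp.2) (by linarith [hp.1] : 0 < 1 + p)
    (by linarith)
  have hcoeff : ∀ n, hypCoeff (1 - p) (1 + p) 3 n =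
      hypCoeff (1 - p) (1 + p) 1 n * hypCoeff 1 1 3 n := hypCoeff_eq_mul _ _ _
  have e₁ (n : ℕ) : hypCoeff 1 1 3 n * (1 - t) ^ n * hypCoeff (1 - p) (1 + p) 1 n =
      hypCoeff (1 - p) (1 + p) 3 n * (1 - t) ^ n := by rw [hcoeff]; ring
  have e₂ (n : ℕ) : hypCoeff 1 1 3 n * (1 - t) ^ n * ((2 * n + 2) / (n + 3)) =
      hypCoeff 1 1 3 n * ((2 * n + 2) / (n + 3)) * (1 - t) ^ n := by ring
  have e₃ (n : ℕ) : hypCoeff 1 1 3 n * ((2 * n + 2) / (n + 3)) * (1 - t) ^ n *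
      hypCoeff (1 - p) (1 + p) 1 n =
        hypCoeff (1 - p) (1 + p) 3 n * ((2 * n + 2) / (n + 3)) * (1 - t) ^ n := by
    rw [hcoeff]; ring
  have hE := hasSum_normCurvElasticity_mul hp0 ht
  have key := tsum_mul_tsum_le_of_antivary (w := fun n ↦ hypCoeff 1 1 3 n * (1 - t) ^ n)
    (fun n ↦ mul_nonneg (hypCoeff_pos n one_pos one_pos three_pos).le
      (pow_nonneg (sub_nonneg.2 ht.2) n)) (hθ.antivary hanti)
  simp only [e₁, e₂, e₃] at key
  simp only [sub_zero, add_zero, ne_eq, OfNat.ofNat_ne_zero, not_false_eq_true, zero_pow] at hE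
  specialize key (summable_hypCoeff_mul_pow _ _ _ hx) hE.summable
    (summable_hypCoeff_mul_pow _ _ _ hx) (summable_normCurvElasticity_zero_weight_mul hp ht)
  rw [hE.tsum_eq, ← hyp_eq_tsum, ← hyp_eq_tsum, mul_right_comm] at key
  exact le_of_mul_le_mul_right key (by simpa using hyp_one_sub_pos hp0 three_pos ht)

theorem normCurvElasticity_le (hp : p ∈ Ico 0 1) (ht : t ∈ Ioc 0 1) :
    normCurvElasticity p t ≤ (1 + p ^ 2 / 2) * normCurvElasticity 0 t := by
  have hcoeff (n : ℕ) : 0 ≤ hypCoeff (1 - p) (1 + p) 3 n :=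
    (hypCoeff_pos n (sub_pos.2 hp.2) (by linarith [hp.1]) three_pos).le
  have hweight (n : ℕ) :
      (2 * n + 2 + p ^ 2) / (n + 3) ≤ (1 + p ^ 2 / 2) * ((2 * n + 2) / ((n : ℝ) + 3)) := by
    rw [← mul_div_assoc]
    gcongr
    nlinarith [mul_nonneg (sq_nonneg p) (n.cast_nonneg (α := ℝ))]
  refine le_of_mul_le_mul_right ?_ (hyp_one_sub_pos hp three_pos ht)
  calc normCurvElasticity p t * hyp (1 - p) (1 + p) 3 (1 - t)
      ≤ ∑' n : ℕ, (1 + p ^ 2 / 2) *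
          (hypCoeff (1 - p) (1 + p) 3 n * ((2 * n + 2) / (n + 3)) * (1 - t) ^ n) := by
        refine hasSum_le (fun n ↦ ?_) (hasSum_normCurvElasticity_mul hp ht)
          ((summable_normCurvElasticity_zero_weight_mul hp ht).mul_left _).hasSum
        rw [← mul_assoc, mul_left_comm]
        exact mul_le_mul_of_nonneg_right (mul_le_mul_of_nonneg_left (hweight n) (hcoeff n))
          (pow_nonneg (sub_nonneg.2 ht.2) n)
    _ ≤ (1 + p ^ 2 / 2) * normCurvElasticity 0 t * hyp (1 - p) (1 + p) 3 (1 - t) := by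
        rw [tsum_mul_left, mul_assoc]
        gcongr
        exact tsum_normCurvElasticity_zero_weight_mul_le hp ht

theorem normCurv_zero_rpow_le {k : ℝ} (hp : p ∈ Ico 0 1) (hk : 1 + p ^ 2 / 2 ≤ k)
    (ht : t ∈ Ioc 0 1) : normCurv 0 (t ^ k) ≤ normCurv p t := by
  have hk1 : 1 ≤ k := by nlinarith
  have hk0 : 0 < k := one_pos.trans_le hk1
  have hp0 : (0 : ℝ) ∈ Ico 0 1 := left_mem_Ico.2 one_pos
  have hpow {s : ℝ} (hs : s ∈ Ioc 0 1) : s ^ k ∈ Ioc 0 1 := rpow_mem_Ioc hk0.le hs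
  have hderiv {s : ℝ} (hs : s ∈ Ioc 0 1) :
      HasDerivAt (fun s ↦ log (normCurv p s) - log (normCurv 0 (s ^ k)))
        ((normCurvElasticity p s - k * normCurvElasticity 0 (s ^ k)) / s) s := by
    refine ((hasDerivAt_log_normCurv hp hs).sub <| (hasDerivAt_log_normCurv hp0 (hpow hs)).comp s
      (hasDerivAt_rpow_const (Or.inl hs.1.ne'))).congr_deriv ?_
    rw [rpow_sub_one hs.1.ne']
    field_simp [(hpow hs).1.ne']
  have hnonpos {s : ℝ} (hs : s ∈ Ioo 0 1) :
      (normCurvElasticity p s - k * normCurvElasticity 0 (s ^ k)) / s ≤ 0 := by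
    have hs' := Ioo_subset_Ioc_self hs
    have hle : s ^ k ≤ s := rpow_le_self_of_le_one hs.1.le hs.2.le hk1
    refine div_nonpos_of_nonpos_of_nonneg (sub_nonpos.2 ?_) hs.1.le
    calc normCurvElasticity p s
        ≤ (1 + p ^ 2 / 2) * normCurvElasticity 0 s := normCurvElasticity_le hp hs'
      _ ≤ k * normCurvElasticity 0 (s ^ k) :=
        mul_le_mul hk (antitoneOn_normCurvElasticity hp0 ⟨(hpow hs').1, hle.trans_lt hs.2⟩ hs hle)
          (normCurvElasticity_zero_nonneg hs') hk0.le
  have hanti : AntitoneOn (fun s ↦ log (normCurv p s) - log (normCurv 0 (s ^ k))) (Ioc 0 1) := by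
    refine antitoneOn_of_hasDerivWithinAt_nonpos (convex_Ioc 0 1)
      (fun s hs ↦ (hderiv hs).continuousAt.continuousWithinAt)
      (fun s hs ↦ (hderiv (interior_subset hs)).hasDerivWithinAt) fun s hs ↦ hnonpos ?_
    rwa [interior_Ioc] at hs
  rw [← log_le_log_iff (normCurv_pos hp0 (hpow ht)) (normCurv_pos hp ht), ← sub_nonneg]
  simpa using hanti ht (right_mem_Ioc.2 one_pos) ht.2

end NormCurv

/-! ### The function `F(-p, p; 1; x)` -/

section HypNegSelf

variable {p x : ℝ}

theorem hypCoeff_one_sub_one_add_eq_prod (p : ℝ) (n : ℕ) :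
    hypCoeff (1 - p) (1 + p) 1 n = ∏ i ∈ Finset.range n, (1 - p ^ 2 / ((i : ℝ) + 1) ^ 2) := by
  induction n with
  | zero => simp
  | succ n ih =>
    rw [hypCoeff_succ, Finset.prod_range_succ, ih]
    field_simp
    ring

theorem tendsto_hypCoeff_one_sub_one_add (hp : p ≠ 0) :
    Tendsto (hypCoeff (1 - p) (1 + p) 1) atTop (𝓝 (sin (π * p) / (π * p))) := by
  have hpi : π * p ≠ 0 := mul_ne_zero pi_ne_zero hp
  refine ((Real.tendsto_euler_sin_prod p).div_const (π * p)).congr fun n ↦ ?_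
  rw [mul_div_cancel_left₀ _ hpi, hypCoeff_one_sub_one_add_eq_prod]

theorem hasSum_hypCoeff_neg_self (hp : p ∈ Ioo 0 1) :
    HasSum (hypCoeff (-p) p 1) (sin (π * p) / (π * p)) := by
  have hc : ∀ n : ℕ, -p + p + 1 + (n : ℝ) ≠ 0 := fun n ↦ by
    rw [neg_add_cancel, zero_add]
    positivity
  have hsum (n : ℕ) :
      ∑ i ∈ Finset.range (n + 1), hypCoeff (-p) p 1 i = hypCoeff (1 - p) (1 + p) 1 n := by
    simpa [neg_add_eq_sub, add_comm] using sum_range_hypCoeff (-p) p n hc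
  have hneg (n : ℕ) : 0 ≤ -hypCoeff (-p) p 1 (n + 1) := by
    have hanti := antitone_hypCoeff_one (sub_pos.2 hp.2) (by linarith [hp.1] : 0 < 1 + p)
      (by linarith) n.le_succ
    rw [← hsum n, ← hsum (n + 1), Finset.sum_range_succ _ (n + 1)] at hanti
    linarith
  have htail : HasSum (fun n ↦ -hypCoeff (-p) p 1 (n + 1)) (-(sin (π * p) / (π * p) - 1)) := by
    rw [hasSum_iff_tendsto_nat_of_nonneg hneg]
    refine ((tendsto_hypCoeff_one_sub_one_add hp.1.ne').sub_const 1).neg.congr fun n ↦ ?_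
    rw [← hsum n, Finset.sum_range_succ', hypCoeff_zero, add_sub_cancel_right,
      Finset.sum_neg_distrib]
  rw [← hasSum_nat_add_iff' 1]
  simpa using htail.neg

theorem hyp_neg_self_one (hp : p ∈ Ioo 0 1) : hyp (-p) p 1 1 = sin (π * p) / (π * p) := by
  simpa [hyp_eq_tsum] using (hasSum_hypCoeff_neg_self hp).tsum_eq

theorem continuousOn_hyp_neg_self (hp : p ∈ Ioo 0 1) : ContinuousOn (hyp (-p) p 1) (Icc 0 1) := by
  refine continuousOn_tsum (fun n ↦ by fun_prop) (hasSum_hypCoeff_neg_self hp).summable.abs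
    fun n x hx ↦ ?_
  rw [norm_mul, norm_pow, Real.norm_eq_abs, Real.norm_of_nonneg hx.1]
  exact mul_le_of_le_one_right (abs_nonneg _) (pow_le_one₀ hx.1 hx.2)

theorem hasDerivAt_hyp_neg_self (p : ℝ) (hx : |x| < 1) :
    HasDerivAt (hyp (-p) p 1) (-p ^ 2 * hyp (1 - p) (1 + p) 2 x) x :=
  (hasDerivAt_hyp (-p) p 1 hx).congr_deriv (by ring_nf)

theorem hasDerivAt_hyp_one_sub_one_add_two (p : ℝ) (hx : |x| < 1) :
    HasDerivAt (hyp (1 - p) (1 + p) 2)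
      ((1 - p ^ 2) / 2 * (hyp (1 - p) (1 + p) 3 x / (1 - x))) x := by
  have hc : ∀ n : ℕ, 1 - p + (1 + p) + 1 + (n : ℝ) ≠ 0 := fun n ↦ by
    rw [sub_add_add_cancel]
    positivity
  have h := one_sub_mul_hyp_add_one (1 - p) (1 + p) hc hx
  have hx1 : 1 - x ≠ 0 := (sub_pos.2 (lt_of_abs_lt hx)).ne'
  rw [show 1 - p + (1 + p) + 1 = 3 by ring] at h
  refine (hasDerivAt_hyp (1 - p) (1 + p) 2 hx).congr_deriv ?_
  rw [← h, mul_div_cancel_left₀ _ hx1]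
  ring_nf

end HypNegSelf

/-! ### Convexity of the difference -/

section HypDiff

/-- The difference `F(-q, q; 1; 1 - t ^ k) - F(-p, p; 1; 1 - t)`, which the theorem compares with
multiples of `1 - t`. -/
noncomputable def hypDiff (p q k t : ℝ) : ℝ := hyp (-q) q 1 (1 - t ^ k) - hyp (-p) p 1 (1 - t)

/-- The derivative of `hypDiff p q k` on `(0, 1]`. -/
noncomputable def hypDiffDeriv (p q k t : ℝ) : ℝ :=
  k * q ^ 2 * (t ^ (k - 1) * hyp (1 - q) (1 + q) 2 (1 - t ^ k)) -
    p ^ 2 * hyp (1 - p) (1 + p) 2 (1 - t)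

variable {p q k t : ℝ}

theorem hypDiff_zero (hk : k ≠ 0) : hypDiff p q k 0 = hyp (-q) q 1 1 - hyp (-p) p 1 1 := by
  simp [hypDiff, zero_rpow hk]

theorem hypDiff_one : hypDiff p q k 1 = 0 := by simp [hypDiff]

theorem hypDiffDeriv_one : hypDiffDeriv p q k 1 = k * q ^ 2 - p ^ 2 := by simp [hypDiffDeriv]

theorem continuousOn_hypDiff (hp : p ∈ Ioo 0 1) (hq : q ∈ Ioo 0 1) (hk : 0 ≤ k) :
    ContinuousOn (hypDiff p q k) (Icc 0 1) := by
  refine ((continuousOn_hyp_neg_self hq).comp (by fun_prop (disch := assumption)) ?_).sub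
    ((continuousOn_hyp_neg_self hp).comp (by fun_prop) ?_)
  · exact fun s hs ↦ ⟨sub_nonneg.2 (rpow_le_one hs.1 hs.2 hk), sub_le_self 1 (rpow_nonneg hs.1 k)⟩
  · exact fun s hs ↦ ⟨sub_nonneg.2 hs.2, sub_le_self 1 hs.1⟩

theorem hasDerivAt_comp_one_sub_rpow {f : ℝ → ℝ} {f' : ℝ} (ht : t ∈ Ioc 0 1)
    (hf : HasDerivAt f f' (1 - t ^ k)) :
    HasDerivAt (fun s ↦ f (1 - s ^ k)) (f' * -(k * t ^ (k - 1))) t :=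
  hf.comp t ((hasDerivAt_rpow_const (Or.inl ht.1.ne')).const_sub 1)

theorem hasDerivAt_hypDiff (hk : 0 ≤ k) (ht : t ∈ Ioc 0 1) :
    HasDerivAt (hypDiff p q k) (hypDiffDeriv p q k t) t := by
  have htk := abs_lt_of_mem_Ico (one_sub_mem_Ico (rpow_mem_Ioc hk ht))
  have ht' := abs_lt_of_mem_Ico (one_sub_mem_Ico ht)
  refine ((hasDerivAt_comp_one_sub_rpow ht (hasDerivAt_hyp_neg_self q htk)).sub
    ((hasDerivAt_hyp_neg_self p ht').comp_const_sub 1 t)).congr_deriv ?_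
  rw [hypDiffDeriv]
  ring

theorem hasDerivAt_hypDiffDeriv (hk : 0 ≤ k) (ht : t ∈ Ioc 0 1) :
    HasDerivAt (hypDiffDeriv p q k)
      ((k * q ^ 2 * ((k - 1) * (t ^ k * hyp (1 - q) (1 + q) 2 (1 - t ^ k)) -
        k * ((1 - q ^ 2) / 2) * normCurv q (t ^ k)) +
          p ^ 2 * ((1 - p ^ 2) / 2) * normCurv p t) / t ^ 2) t := by
  have htk := rpow_mem_Ioc hk ht
  have ht0 := ht.1.ne'
  have hq := hasDerivAt_comp_one_sub_rpow ht
    (hasDerivAt_hyp_one_sub_one_add_two q (abs_lt_of_mem_Ico (one_sub_mem_Ico htk)))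
  have hp := (hasDerivAt_hyp_one_sub_one_add_two p
    (abs_lt_of_mem_Ico (one_sub_mem_Ico ht))).comp_const_sub 1 t
  refine ((((hasDerivAt_rpow_const (p := k - 1) (Or.inl ht0)).mul hq).const_mul
    (k * q ^ 2)).sub (hp.const_mul (p ^ 2))).congr_deriv ?_
  simp only [normCurv, sub_sub_cancel, rpow_sub_one ht0]
  field_simp
  ring

theorem deriv_hypDiffDeriv_numerator_pos (hp : p ∈ Ioo 0 1) (hq : q ∈ Ioo 0 1)
    (hk : 1 + p ^ 2 / 2 ≤ k) (hpq : k * q ^ 2 * (2 - k - k * q ^ 2) ≤ p ^ 2 * (1 - p ^ 2))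
    (ht : t ∈ Ioo 0 1) :
    0 < k * q ^ 2 * ((k - 1) * (t ^ k * hyp (1 - q) (1 + q) 2 (1 - t ^ k)) -
      k * ((1 - q ^ 2) / 2) * normCurv q (t ^ k)) +
        p ^ 2 * ((1 - p ^ 2) / 2) * normCurv p t := by
  have hk1 : 1 < k := lt_of_lt_of_le (lt_add_of_pos_right 1 (half_pos (pow_pos hp.1 2))) hk
  have hk0 : 0 < k := one_pos.trans hk1
  have ht' := Ioo_subset_Ioc_self ht
  have hp' := Ioo_subset_Ico_self hp
  have hq' := Ioo_subset_Ico_self hq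
  have htk := rpow_mem_Ioc hk0.le ht'
  have htk1 : t ^ k < 1 := rpow_lt_one ht.1.le ht.2 hk0
  have hpos := normCurv_pos hq' htk
  have hlt : normCurv q (t ^ k) < t ^ k * hyp (1 - q) (1 + q) 2 (1 - t ^ k) :=
    mul_lt_mul_of_pos_left (hyp_lt_hyp_of_lt (sub_pos.2 hq.2) (by linarith [hq.1]) two_pos
      (by norm_num) ⟨sub_pos.2 htk1, sub_lt_self 1 htk.1⟩) htk.1
  have hle : normCurv q (t ^ k) ≤ normCurv p t :=
    (normCurv_le_normCurv_zero hq' htk).trans (normCurv_zero_rpow_le hp' hk ht')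
  have hcoef : 0 < k * q ^ 2 * (k - 1) := mul_pos (mul_pos hk0 (pow_pos hq.1 2)) (sub_pos.2 hk1)
  have hp2 : 0 ≤ p ^ 2 * (1 - p ^ 2) :=
    mul_nonneg (sq_nonneg p) (sub_nonneg.2 (pow_le_one₀ hp.1.le hp.2.le))
  have h₁ := mul_lt_mul_of_pos_left hlt hcoef
  have h₂ := mul_le_mul_of_nonneg_left hle hp2
  have h₃ := mul_le_mul_of_nonneg_right hpq hpos.le
  linear_combination h₁ + (h₂ + h₃) / 2

theorem strictConvexOn_hypDiff (hp : p ∈ Ioo 0 1) (hq : q ∈ Ioo 0 1) (hk : 1 + p ^ 2 / 2 ≤ k)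
    (hpq : k * q ^ 2 * (2 - k - k * q ^ 2) ≤ p ^ 2 * (1 - p ^ 2)) :
    StrictConvexOn ℝ (Icc 0 1) (hypDiff p q k) := by
  have hk0 : 0 ≤ k := by nlinarith
  refine StrictMonoOn.strictConvexOn_of_deriv (convex_Icc 0 1) (continuousOn_hypDiff hp hq hk0) ?_
  rw [interior_Icc]
  have hmono : StrictMonoOn (hypDiffDeriv p q k) (Ioo 0 1) := by
    refine strictMonoOn_of_hasDerivWithinAt_pos (convex_Ioo 0 1)
      (fun t ht ↦ (hasDerivAt_hypDiffDeriv hk0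
        (Ioo_subset_Ioc_self ht)).continuousAt.continuousWithinAt)
      (fun t ht ↦ (hasDerivAt_hypDiffDeriv hk0
        (Ioo_subset_Ioc_self (interior_subset ht))).hasDerivWithinAt) fun t ht ↦ ?_
    have ht' := interior_subset ht
    exact div_pos (deriv_hypDiffDeriv_numerator_pos hp hq hk hpq ht') (pow_pos ht'.1 2)
  exact hmono.congr fun t ht ↦ (hasDerivAt_hypDiff hk0 (Ioo_subset_Ioc_self ht)).deriv.symm

theorem lt_hypDiff (hp : p ∈ Ioo 0 1) (hq : q ∈ Ioo 0 1) (hk : 1 + p ^ 2 / 2 ≤ k)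
    (hpq : k * q ^ 2 * (2 - k - k * q ^ 2) ≤ p ^ 2 * (1 - p ^ 2)) (ht : t ∈ Ioo 0 1) :
    (p ^ 2 - k * q ^ 2) * (1 - t) < hypDiff p q k t := by
  have hk0 : 0 ≤ k := by nlinarith
  have hslope := (strictConvexOn_hypDiff hp hq hk hpq).slope_lt_of_hasDerivAt
    (Ioo_subset_Icc_self ht) (right_mem_Icc.2 zero_le_one) ht.2
    (hasDerivAt_hypDiff hk0 (right_mem_Ioc.2 one_pos))
  rw [slope_def_field, hypDiff_one, hypDiffDeriv_one, div_lt_iff₀ (sub_pos.2 ht.2)] at hslope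
  linarith

theorem hypDiff_lt (hp : p ∈ Ioo 0 1) (hq : q ∈ Ioo 0 1) (hk : 1 + p ^ 2 / 2 ≤ k)
    (hpq : k * q ^ 2 * (2 - k - k * q ^ 2) ≤ p ^ 2 * (1 - p ^ 2)) (ht : t ∈ Ioo 0 1) :
    hypDiff p q k t < (hyp (-q) q 1 1 - hyp (-p) p 1 1) * (1 - t) := by
  have hk0 : k ≠ 0 := by nlinarith
  have hchord := (strictConvexOn_hypDiff hp hq hk hpq).2 (left_mem_Icc.2 zero_le_one)
    (right_mem_Icc.2 zero_le_one) zero_ne_one (sub_pos.2 ht.2) ht.1 (sub_add_cancel 1 t)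
  rw [← hypDiff_zero hk0, mul_comm]
  simpa [hypDiff_one] using hchord

end HypDiff

/-! ### The parameter region -/

section Parameters

variable {z z₀ k w : ℝ}

theorem concaveOn_quartic :
    ConcaveOn ℝ (Ici (1 / 4)) fun z : ℝ ↦ 4 * z * (1 - z) * (1 + z) ^ 2 := by
  have hderiv (z : ℝ) : HasDerivAt (fun z : ℝ ↦ 4 * z * (1 - z) * (1 + z) ^ 2)
      (4 * (1 + 2 * z - 3 * z ^ 2 - 4 * z ^ 3)) z := by
    refine ((((hasDerivAt_id z).const_mul 4).mul ((hasDerivAt_id z).const_sub 1)).mul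
      (((hasDerivAt_id z).const_add 1).pow 2)).congr_deriv ?_
    simp only [id_eq, Pi.mul_apply, Pi.pow_apply]
    ring
  refine AntitoneOn.concaveOn_of_deriv (convex_Ici _) (by fun_prop) (by fun_prop) ?_
  intro x hx y hy hxy
  rw [interior_Ici, mem_Ioi] at hx hy
  rw [(hderiv x).deriv, (hderiv y).deriv]
  have hslope : 0 ≤ 3 * (x + y) + 4 * (x ^ 2 + x * y + y ^ 2) - 2 := by nlinarith
  linear_combination 4 * mul_nonneg (sub_nonneg.2 hxy) hslope

theorem one_le_quartic_of_mem_Icc (hz : z ∈ Icc (1 / 4) z₀)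
    (hroot : 4 * z₀ * (1 - z₀) * (1 + z₀) ^ 2 = 1) : 1 ≤ 4 * z * (1 - z) * (1 + z) ^ 2 := by
  have h := concaveOn_quartic.min_le_of_mem_Icc (self_mem_Ici) (mem_Ici.2 (hz.1.trans hz.2)) hz
  simp only [hroot] at h
  exact (le_min (by norm_num) le_rfl).trans h

theorem mul_sub_le_of_one_le_quartic (hz : 0 ≤ z)
    (h : 1 ≤ 4 * z * (1 - z) * (1 + z) ^ 2) : w * (1 / (z + 1) - w) ≤ z * (1 - z) := by
  calc w * (1 / (z + 1) - w) ≤ (1 / (z + 1)) ^ 2 / 4 := by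
        linarith [sq_nonneg (w - 1 / (z + 1) / 2)]
    _ ≤ z * (1 - z) := by
        rw [one_div_pow, div_div, div_le_iff₀ (by positivity)]
        linarith

theorem mul_sub_le_of_le_quarter (hz : 0 ≤ z) (hz4 : z ≤ 1 / 4) (hw : w ≤ z) :
    w * (1 / (z + 1) - w) ≤ z * (1 - z) := by
  have hle : 1 / (z + 1) ≤ 1 := div_le_one_of_le₀ (by linarith) (by positivity)
  have hge : 2 * z ≤ 1 / (z + 1) := by
    rw [le_div_iff₀ (by positivity)]
    nlinarith
  nlinarith [mul_nonneg (sub_nonneg.2 hw) (by linarith : 0 ≤ 1 / (z + 1) - z - w)]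

theorem mul_two_sub_sub_le (hz : z ∈ Icc 0 z₀) (hroot : 4 * z₀ * (1 - z₀) * (1 + z₀) ^ 2 = 1)
    (hk : (2 * z + 1) / (z + 1) ≤ k) (hw : w ∈ Icc 0 z) : w * (2 - k - w) ≤ z * (1 - z) := by
  have hz1 : 0 < z + 1 := add_pos_of_nonneg_of_pos hz.1 one_pos
  have hk' : 2 - k ≤ 1 / (z + 1) := by
    have : (2 * z + 1) / (z + 1) = 2 - 1 / (z + 1) := by field_simp; ring
    linarith
  refine (mul_le_mul_of_nonneg_left (sub_le_sub_right hk' w) hw.1).trans ?_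
  rcases le_total z (1 / 4) with h | h
  · exact mul_sub_le_of_le_quarter hz.1 h hw.2
  · exact mul_sub_le_of_one_le_quartic hz.1 (one_le_quartic_of_mem_Icc ⟨h, hz.2⟩ hroot)

theorem one_add_half_le (hz : z ∈ Icc 0 1) : 1 + z / 2 ≤ (2 * z + 1) / (z + 1) := by
  rw [le_div_iff₀ (by linarith [hz.1])]
  nlinarith [mul_nonneg hz.1 (sub_nonneg.2 hz.2)]

end Parameters

theorem hypDiff_mem_Ioo {p q k z₀ t : ℝ} (hp : p ∈ Ioo 0 1) (hq : 0 < q) (hpz : p ^ 2 ≤ z₀)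
    (hroot : 4 * z₀ * (1 - z₀) * (1 + z₀) ^ 2 = 1) (hk : (2 * p ^ 2 + 1) / (p ^ 2 + 1) ≤ k)
    (hkq : k * q ^ 2 ≤ p ^ 2) (ht : t ∈ Ioo 0 1) :
    hypDiff p q k t ∈ Ioo ((p ^ 2 - k * q ^ 2) * (1 - t))
      ((sin (π * q) / (π * q) - sin (π * p) / (π * p)) * (1 - t)) := by
  have hp2 : p ^ 2 ∈ Icc 0 1 := ⟨sq_nonneg p, pow_le_one₀ hp.1.le hp.2.le⟩
  have hk' : 1 + p ^ 2 / 2 ≤ k := (one_add_half_le hp2).trans hk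
  have hk1 : 1 ≤ k := (le_add_of_nonneg_right (half_pos (pow_pos hp.1 2)).le).trans hk'
  have hqp : q ≤ p :=
    (sq_le_sq₀ hq.le hp.1.le).1 ((le_mul_of_one_le_left (sq_nonneg q) hk1).trans hkq)
  have hq' : q ∈ Ioo 0 1 := ⟨hq, hqp.trans_lt hp.2⟩
  have hpq := mul_two_sub_sub_le ⟨hp2.1, hpz⟩ hroot hk ⟨by positivity, hkq⟩
  rw [← hyp_neg_self_one hp, ← hyp_neg_self_one hq']
  exact ⟨lt_hypDiff hp hq' hk' hpq ht, hypDiff_lt hp hq' hk' hpq ht⟩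

theorem div_mul_sq_le_sq {c d p q : ℝ} (hc : 0 < c) (hd : 0 < d) (hq : 0 ≤ q)
    (h : q ≤ √(c / d) * p) : d / c * q ^ 2 ≤ p ^ 2 := by
  calc d / c * q ^ 2 ≤ d / c * (√(c / d) * p) ^ 2 := by gcongr
    _ = p ^ 2 := by
      rw [mul_pow, sq_sqrt (by positivity)]
      field_simp

theorem sin_pi_mul_one_sub_div (r : ℝ) :
    sin (π * (1 - r)) / (π * (1 - r)) = 1 / π * (sin (π * r) / (1 - r)) := by
  rw [mul_one_sub, sin_pi_sub, ← mul_one_sub, div_mul_div_comm, one_mul]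

theorem stmt14 (a₀ a c d : ℝ)
    (ha₀ : a₀ ∈ Ioo (0:ℝ) 1)
    (hroot : 4 * a₀ * (2 - a₀) * (1 - a₀) ^ 2 * (a₀ ^ 2 - 2 * a₀ + 2) ^ 2 = 1)
    (hmin : ∀ x ∈ Ioo (0:ℝ) 1,
      4 * x * (2 - x) * (1 - x) ^ 2 * (x ^ 2 - 2 * x + 2) ^ 2 = 1 → a₀ ≤ x)
    (ha : a ∈ Ico a₀ 1)
    (hc : 0 < c) (hd : 0 < d) (hcd : c / d ≤ ((a - 1) ^ 2 + 1) / (2 * (a - 1) ^ 2 + 1)) :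
    ∀ x ∈ Ioo (0:ℝ) 1, ∀ δ ∈ Ioc (a - 1) ((Real.sqrt (c / d) - 1) * (1 - a)),
      hyp (a - 1) (1 - a) 1 (1 - x ^ c) +
          (-(d / c) * (δ ^ 2 + 2 * (1 - a) * δ + (1 - a) ^ 2 * (1 - c / d))) * (1 - x ^ c)
        < hyp (a - 1 - δ) (1 - a + δ) 1 (1 - x ^ d) ∧
      hyp (a - 1 - δ) (1 - a + δ) 1 (1 - x ^ d)
        < hyp (a - 1) (1 - a) 1 (1 - x ^ c) +
            ((1 / π) * (Real.sin (π * (a - δ)) / (1 - a + δ) - Real.sin (π * a) / (1 - a))) *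
              (1 - x ^ c) := by
  rintro x ⟨hx0, hx1⟩ δ ⟨hδ, hδ'⟩
  have hk : (2 * (1 - a) ^ 2 + 1) / ((1 - a) ^ 2 + 1) ≤ d / c := by
    simpa only [one_div_div, sub_sq_comm a 1] using one_div_le_one_div_of_le (div_pos hc hd) hcd
  obtain ⟨hlower, hupper⟩ := hypDiff_mem_Ioo (p := 1 - a) (q := 1 - a + δ) (z₀ := (1 - a₀) ^ 2)
    ⟨sub_pos.2 ha.2, by linarith [ha₀.1, ha.1]⟩ (by linarith)
    (pow_le_pow_left₀ (sub_pos.2 ha.2).le (sub_le_sub_left ha.1 1) 2)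
    (by linear_combination hroot) hk
    (div_mul_sq_le_sq hc hd (by linarith) (by linarith))
    ⟨rpow_pos_of_pos hx0 c, rpow_lt_one hx0.le hx1 hc⟩
  have hC₃ : -(d / c) * (δ ^ 2 + 2 * (1 - a) * δ + (1 - a) ^ 2 * (1 - c / d)) =
      (1 - a) ^ 2 - d / c * (1 - a + δ) ^ 2 := by
    field_simp
    ring
  have hC₄ : 1 / π * (sin (π * (a - δ)) / (1 - a + δ) - sin (π * a) / (1 - a)) =
      sin (π * (1 - a + δ)) / (π * (1 - a + δ)) - sin (π * (1 - a)) / (π * (1 - a)) := by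
    rw [sub_add, sin_pi_mul_one_sub_div, sin_pi_mul_one_sub_div, mul_sub]
  rw [hypDiff, ← rpow_mul hx0.le, mul_div_cancel₀ d hc.ne'] at hlower hupper
  rw [hC₃, hC₄, show a - 1 - δ = -(1 - a + δ) by ring, ← neg_sub 1 a]
  exact ⟨by linarith, by linarith⟩
end

section
/- Let c, d > 0 with 0 < c/d ≤ 5/6 and let δ₃ = (√(c/d) − 1)/2 < 0. Then for all x ∈ (0,1) and all δ ∈ (−1/2, δ₃], F(−1/2, 1/2; 1; 1−x^c) + C₅(δ)(1−x^c) < F(−1/2−δ, 1/2+δ; 1; 1−x^d) < F(−1/2, 1/2; 1; 1−x^c) + C₆(δ)(1−x^c), where C₅(δ) = −(d/c)·(δ² + δ + (1/4)(1 − c/d)) ≥ 0 and C₆(δ) = (2/π)·[cos(πδ)/(1+2δ) − 1]. -/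
open Real Set Filter Topology

/-!
Put `a = 1 / 2 + δ`, `q = d / c` and `y = x ^ c`. The condition on `δ` says `a ^ 2 * q ≤ 1 / 4`,
and then `F(-a, a; 1; 1 - y ^ q) - F(-1/2, 1/2; 1; 1 - y)` is a strictly convex function of `y` on
`[0, 1]` because `q ≥ 6 / 5`. It vanishes at `y = 1`, so it lies above its tangent there, whose
slope is `a ^ 2 * q - 1 / 4 = -C₅`, and below its chord from `y = 0`, where Euler's product for the
sine gives the value `sin (π * a) / (π * a) - 2 / π = C₆`.

For the convexity, the Euler transformation `(1 - x) * F(a + 1, b + 1; c; x) = F(a, b; c; x)`, valid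
when `c = a + b + 1`, expresses the second derivatives through `F(1 - a, 1 + a; 3; ·)` and
`F(1 - a, 1 + a; 2; ·)`, the latter of which dominates the former. Bounding `F(1 - a, 1 + a; 3; x)`
below by its linear part and above by `1 + x` reduces the comparison to an inequality between powers
of `y`.
-/

section PowerSeries

theorem hasDerivAt_formalMultilinearSeries_sum {𝕜 F : Type*} [NontriviallyNormedField 𝕜]
    [NormedAddCommGroup F] [NormedSpace 𝕜 F] [CompleteSpace F]
    (p : FormalMultilinearSeries 𝕜 𝕜 F) {x : 𝕜} (hx : ‖x‖ₑ < p.radius) :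
    HasDerivAt p.sum (∑' n, x ^ n • (n + 1) • p.coeff (n + 1)) x := by
  have hsum : HasSum (fun n ↦ p.derivSeries n fun _ ↦ x) (p.derivSeries.sum x) := by
    refine p.derivSeries.hasSum ?_
    rw [Metric.mem_eball, edist_zero_right]
    exact hx.trans_le p.radius_le_radius_derivSeries
  have hcoeff (n : ℕ) : (p.derivSeries n fun _ ↦ x) 1 = x ^ n • (n + 1) • p.coeff (n + 1) := by
    rw [FormalMultilinearSeries.apply_eq_pow_smul_coeff, smul_apply, p.derivSeries_coeff_one]
  have happly := hsum.mapL (ContinuousLinearMap.apply 𝕜 F (1 : 𝕜))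
  simp only [ContinuousLinearMap.apply_apply, hcoeff] at happly
  rw [happly.tsum_eq]
  exact (FormalMultilinearSeries.hasFDerivAt_sum hx).hasDerivAt

theorem tsum_mul_pow_le_add_mul {u : ℕ → ℝ} {M x : ℝ} (hu : ∀ n, 0 ≤ u n)
    (hM : ∀ n, ∑ i ∈ Finset.range (n + 1), u i ≤ M) (hx0 : 0 ≤ x) (hx1 : x ≤ 1) :
    ∑' n, u n * x ^ n ≤ u 0 + (M - u 0) * x := by
  have hpartial (n : ℕ) :
      ∑ i ∈ Finset.range (n + 1), u i * x ^ i ≤ u 0 + (M - u 0) * x := by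
    have hM' := hM n
    rw [Finset.sum_range_succ'] at hM' ⊢
    calc ∑ i ∈ Finset.range n, u (i + 1) * x ^ (i + 1) + u 0 * x ^ 0
        ≤ ∑ i ∈ Finset.range n, u (i + 1) * x + u 0 := by
          rw [pow_zero, mul_one]
          gcongr with i
          · exact hu _
          · exact pow_le_of_le_one hx0 hx1 i.succ_ne_zero
      _ = (∑ i ∈ Finset.range n, u (i + 1)) * x + u 0 := by rw [Finset.sum_mul]
      _ ≤ u 0 + (M - u 0) * x := by
          rw [add_comm]
          gcongr
          linarith
  refine Real.tsum_le_of_sum_range_le (fun n ↦ mul_nonneg (hu n) (pow_nonneg hx0 n)) fun n ↦ ?_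
  refine (Finset.sum_le_sum_of_subset_of_nonneg (Finset.range_subset_range.2 n.le_succ)
    fun i _ _ ↦ ?_).trans (hpartial n)
  exact mul_nonneg (hu i) (pow_nonneg hx0 i)

end PowerSeries

section Pochhammer

open Polynomial

theorem ascPochhammer_eval_eq_prod_range {R : Type*} [CommSemiring R] (n : ℕ) (x : R) :
    (ascPochhammer R n).eval x = ∏ i ∈ Finset.range n, (x + i) := by
  induction n with
  | zero => simp
  | succ n ih => rw [ascPochhammer_succ_eval, ih, Finset.prod_range_succ]

theorem ascPochhammer_succ_eval_left {R : Type*} [CommSemiring R] (n : ℕ) (x : R) :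
    (ascPochhammer R (n + 1)).eval x = x * (ascPochhammer R n).eval (x + 1) := by
  simp [ascPochhammer_succ_left]

theorem ascPochhammer_eval_nonneg {R : Type*} [CommSemiring R] [PartialOrder R]
    [IsOrderedRing R] (n : ℕ) {x : R} (hx : 0 ≤ x) :
    0 ≤ (ascPochhammer R n).eval x := by
  rw [ascPochhammer_eval_eq_prod_range]
  exact Finset.prod_nonneg fun i _ ↦ add_nonneg hx i.cast_nonneg

end Pochhammer

theorem hyp_eq_ordinaryHypergeometric (a b c : ℝ) : hyp a b c = ₂F₁ a b c := by
  funext x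
  simp only [hyp, ordinaryHypergeometric_eq_tsum, ascPochhammer_eval_eq_prod_range, smul_eq_mul]
  refine tsum_congr fun n ↦ ?_
  rw [div_eq_mul_inv, mul_inv]
  ring

section Coefficients

variable {K : Type*} [Field K] (a b c : K) (n : ℕ)

theorem ordinaryHypergeometricCoefficient_zero :
    ordinaryHypergeometricCoefficient a b c 0 = 1 := by
  simp [ordinaryHypergeometricCoefficient]

theorem ordinaryHypergeometricCoefficient_succ :
    ordinaryHypergeometricCoefficient a b c (n + 1) =
      ordinaryHypergeometricCoefficient a b c n * ((a + n) * (b + n) / ((c + n) * (n + 1))) := by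
  simp only [ordinaryHypergeometricCoefficient, ascPochhammer_succ_eval, Nat.factorial_succ,
    Nat.cast_mul, Nat.cast_succ, mul_inv, div_eq_mul_inv]
  ring

theorem ordinaryHypergeometricCoefficient_succ_eq_add_one :
    ordinaryHypergeometricCoefficient a b c (n + 1) =
      ordinaryHypergeometricCoefficient (a + 1) (b + 1) c n * (a * b / ((c + n) * (n + 1))) := by
  rw [ordinaryHypergeometricCoefficient, ascPochhammer_succ_eval_left n a,
    ascPochhammer_succ_eval_left n b, ascPochhammer_succ_eval n c, Nat.factorial_succ,
    Nat.cast_mul, Nat.cast_succ, mul_inv, mul_inv, div_eq_mul_inv, mul_inv]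
  ring

theorem succ_mul_ordinaryHypergeometricCoefficient_succ [CharZero K] :
    (n + 1) * ordinaryHypergeometricCoefficient a b c (n + 1) =
      a * b / c * ordinaryHypergeometricCoefficient (a + 1) (b + 1) (c + 1) n := by
  have hn : (n + 1 : K) ≠ 0 := n.cast_add_one_ne_zero
  simp only [ordinaryHypergeometricCoefficient, ascPochhammer_succ_eval_left, Nat.factorial_succ,
    Nat.cast_mul, Nat.cast_succ, mul_inv]
  field_simp

variable {a b c}

theorem sum_range_ordinaryHypergeometricCoefficient [CharZero K] (habc : a + b + 1 = c)
    (hc : ∀ k : ℕ, c + k ≠ 0) :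
    ∑ i ∈ Finset.range (n + 1), ordinaryHypergeometricCoefficient a b c i =
      ordinaryHypergeometricCoefficient (a + 1) (b + 1) c n := by
  induction n with
  | zero => simp
  | succ n ih =>
    have hn : (n + 1 : K) ≠ 0 := n.cast_add_one_ne_zero
    have hcn := hc n
    rw [Finset.sum_range_succ, ih, ordinaryHypergeometricCoefficient_succ_eq_add_one a,
      ordinaryHypergeometricCoefficient_succ (a + 1), ← mul_one_add]
    congr 1
    field_simp
    rw [← habc]
    ring

end Coefficients

section RCLike

variable {𝕜 : Type*} [RCLike 𝕜] (a b c : 𝕜)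

theorem one_le_ordinaryHypergeometricSeries_radius :
    1 ≤ (ordinaryHypergeometricSeries 𝕜 a b c).radius := by
  by_cases h : ∀ k : ℕ, (k : 𝕜) ≠ -a ∧ (k : 𝕜) ≠ -b ∧ (k : 𝕜) ≠ -c
  · exact (ordinaryHypergeometricSeries_radius_eq_one 𝕜 a b c h).ge
  · simp only [not_forall, not_and_or, not_not] at h
    have neg_swap {k : ℕ} {z : 𝕜} (hk : (k : 𝕜) = -z) : z = -(k : 𝕜) := by rw [hk, neg_neg]
    obtain ⟨k, hk | hk | hk⟩ := h <;> rw [neg_swap hk]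
    · simp [ordinaryHypergeometric_radius_top_of_neg_nat₁]
    · simp [ordinaryHypergeometric_radius_top_of_neg_nat₂]
    · simp [ordinaryHypergeometric_radius_top_of_neg_nat₃]

variable {x : 𝕜}

theorem enorm_lt_ordinaryHypergeometricSeries_radius (hx : ‖x‖ < 1) :
    ‖x‖ₑ < (ordinaryHypergeometricSeries 𝕜 a b c).radius := by
  refine lt_of_lt_of_le ?_ (one_le_ordinaryHypergeometricSeries_radius a b c)
  rwa [← ofReal_norm, ENNReal.ofReal_lt_one]

theorem hasSum_ordinaryHypergeometric (hx : ‖x‖ < 1) :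
    HasSum (fun n ↦ ordinaryHypergeometricCoefficient a b c n * x ^ n) (₂F₁ a b c x) := by
  have hmem : x ∈ Metric.eball 0 (ordinaryHypergeometricSeries 𝕜 a b c).radius := by
    rw [Metric.mem_eball, edist_zero_right]
    exact enorm_lt_ordinaryHypergeometricSeries_radius a b c hx
  simpa only [ordinaryHypergeometricSeries_apply_eq, smul_eq_mul, ordinaryHypergeometric] using
    (ordinaryHypergeometricSeries 𝕜 a b c).hasSum hmem

theorem hasDerivAt_ordinaryHypergeometric (hx : ‖x‖ < 1) :
    HasDerivAt (₂F₁ a b c : 𝕜 → 𝕜) (a * b / c * ₂F₁ (a + 1) (b + 1) (c + 1) x) x := by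
  have hrad := enorm_lt_ordinaryHypergeometricSeries_radius a b c hx
  refine (hasDerivAt_formalMultilinearSeries_sum _ hrad).congr_deriv ?_
  rw [ordinaryHypergeometric_eq_tsum, ← tsum_mul_left]
  refine tsum_congr fun n ↦ ?_
  rw [ordinaryHypergeometricSeries, FormalMultilinearSeries.coeff_ofScalars, smul_eq_mul,
    nsmul_eq_mul, Nat.cast_succ, succ_mul_ordinaryHypergeometricCoefficient_succ, smul_eq_mul]
  ring

variable {a b c}

theorem one_sub_mul_ordinaryHypergeometric (habc : a + b + 1 = c) (hc : ∀ k : ℕ, c + k ≠ 0)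
    (hx : ‖x‖ < 1) : (1 - x) * ₂F₁ (a + 1) (b + 1) c x = ₂F₁ a b c x := by
  have hu := hasSum_ordinaryHypergeometric (a + 1) (b + 1) c hx
  have hshift := ((hasSum_nat_add_iff' 1).2 hu).sub (hu.mul_left x)
  have hdiff (n : ℕ) : ordinaryHypergeometricCoefficient (a + 1) (b + 1) c (n + 1) -
      ordinaryHypergeometricCoefficient (a + 1) (b + 1) c n =
      ordinaryHypergeometricCoefficient a b c (n + 1) := by
    simp only [← sum_range_ordinaryHypergeometricCoefficient _ habc hc]
    rw [Finset.sum_range_succ, add_sub_cancel_left]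
  have hv := (hasSum_nat_add_iff' 1).2 (hasSum_ordinaryHypergeometric a b c hx)
  have huv := hshift.unique (hv.congr_fun fun n ↦ by rw [← hdiff]; ring)
  simp only [Finset.sum_range_one, ordinaryHypergeometricCoefficient_zero] at huv
  linear_combination huv

theorem continuousOn_ordinaryHypergeometric
    (h : Summable fun n ↦ ‖ordinaryHypergeometricCoefficient a b c n‖) :
    ContinuousOn (₂F₁ a b c : 𝕜 → 𝕜) (Metric.closedBall 0 1) := by
  rw [ordinaryHypergeometric_eq_tsum]
  refine continuousOn_tsum (fun n ↦ by fun_prop) h fun n x hx ↦ ?_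
  rw [norm_smul, norm_pow]
  exact mul_le_of_le_one_right (norm_nonneg _)
    (pow_le_one₀ (norm_nonneg x) (mem_closedBall_zero_iff.1 hx))

end RCLike

section Positive

theorem ordinaryHypergeometricCoefficient_nonneg {K : Type*} [Field K] [LinearOrder K]
    [IsStrictOrderedRing K] {a b c : K} (ha : 0 ≤ a) (hb : 0 ≤ b) (hc : 0 ≤ c) (n : ℕ) :
    0 ≤ ordinaryHypergeometricCoefficient a b c n := by
  have hna := ascPochhammer_eval_nonneg n ha
  have hnb := ascPochhammer_eval_nonneg n hb
  have hnc := ascPochhammer_eval_nonneg n hc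
  rw [ordinaryHypergeometricCoefficient]
  positivity

variable {a b c c' x : ℝ}

theorem one_add_mul_le_ordinaryHypergeometric (ha : 0 ≤ a) (hb : 0 ≤ b) (hc : 0 ≤ c)
    (hx : x ∈ Ico 0 1) : 1 + a * b / c * x ≤ ₂F₁ a b c x := by
  have hnorm : ‖x‖ < 1 := by rw [norm_eq_abs, abs_of_nonneg hx.1]; exact hx.2
  have hle := sum_le_hasSum (Finset.range 2)
    (fun n _ ↦ mul_nonneg (ordinaryHypergeometricCoefficient_nonneg ha hb hc n)
      (pow_nonneg hx.1 n)) (hasSum_ordinaryHypergeometric a b c hnorm)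
  simpa [Finset.sum_range_succ, ordinaryHypergeometricCoefficient, div_eq_mul_inv] using hle

theorem ordinaryHypergeometric_le_of_le (ha : 0 ≤ a) (hb : 0 ≤ b) (hc : 0 < c) (hcc' : c ≤ c')
    (hx : x ∈ Ico 0 1) : ₂F₁ a b c' x ≤ ₂F₁ a b c x := by
  have hnorm : ‖x‖ < 1 := by rw [norm_eq_abs, abs_of_nonneg hx.1]; exact hx.2
  refine hasSum_le (fun n ↦ ?_) (hasSum_ordinaryHypergeometric a b c' hnorm)
    (hasSum_ordinaryHypergeometric a b c hnorm)
  have hna := ascPochhammer_eval_nonneg n ha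
  have hnb := ascPochhammer_eval_nonneg n hb
  have hpos : 0 < (ascPochhammer ℝ n).eval c := ascPochhammer_pos n c hc
  have hmono : (ascPochhammer ℝ n).eval c ≤ (ascPochhammer ℝ n).eval c' := by
    simp only [ascPochhammer_eval_eq_prod_range]
    gcongr
  have hx0 := hx.1
  rw [ordinaryHypergeometricCoefficient, ordinaryHypergeometricCoefficient]
  gcongr

end Positive

section NegSelf

variable {a : ℝ}

theorem ordinaryHypergeometricCoefficient_neg_self_succ_nonpos (ha : |a| ≤ 1) (n : ℕ) :
    ordinaryHypergeometricCoefficient (-a) a 1 (n + 1) ≤ 0 := by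
  obtain ⟨hneg, hle⟩ := abs_le.1 ha
  have hcoeff := succ_mul_ordinaryHypergeometricCoefficient_succ (-a) a 1 n
  have hnonneg : 0 ≤ ordinaryHypergeometricCoefficient (-a + 1) (a + 1) (1 + 1) n :=
    ordinaryHypergeometricCoefficient_nonneg (by linarith) (by linarith) (by norm_num) n
  have hn : (0 : ℝ) < n + 1 := n.cast_add_one_pos
  refine nonpos_of_mul_nonpos_right (a := (n + 1 : ℝ)) ?_ hn
  rw [hcoeff, div_one, neg_mul, neg_mul]
  exact neg_nonpos.2 (mul_nonneg (mul_self_nonneg a) hnonneg)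

theorem sum_range_ordinaryHypergeometricCoefficient_neg_self (a : ℝ) (n : ℕ) :
    ∑ i ∈ Finset.range (n + 1), ordinaryHypergeometricCoefficient (-a) a 1 i =
      ∏ i ∈ Finset.range n, (1 - a ^ 2 / ((i : ℝ) + 1) ^ 2) := by
  rw [sum_range_ordinaryHypergeometricCoefficient n (by ring) fun k ↦ by positivity]
  induction n with
  | zero => rw [ordinaryHypergeometricCoefficient_zero, Finset.prod_range_zero]
  | succ n ih =>
    rw [ordinaryHypergeometricCoefficient_succ, ih, Finset.prod_range_succ]
    congr 1
    field_simp
    ring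

theorem summable_norm_ordinaryHypergeometricCoefficient_neg_self (ha : |a| ≤ 1) :
    Summable fun n ↦ ‖ordinaryHypergeometricCoefficient (-a) a 1 n‖ := by
  refine (summable_nat_add_iff 1).1 (summable_of_sum_range_le (c := 1) (fun n ↦ norm_nonneg _)
    fun n ↦ ?_)
  have hprod : 0 ≤ ∏ i ∈ Finset.range n, (1 - a ^ 2 / ((i : ℝ) + 1) ^ 2) := by
    refine Finset.prod_nonneg fun i _ ↦ sub_nonneg.2 ((div_le_one (by positivity)).2 ?_)
    rw [sq_le_sq, abs_of_nonneg (by positivity : (0 : ℝ) ≤ i + 1)]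
    exact ha.trans (by simp)
  rw [← sum_range_ordinaryHypergeometricCoefficient_neg_self, Finset.sum_range_succ',
    ordinaryHypergeometricCoefficient_zero] at hprod
  simp only [norm_eq_abs,
    abs_of_nonpos (ordinaryHypergeometricCoefficient_neg_self_succ_nonpos ha _),
    Finset.sum_neg_distrib]
  linarith

theorem continuousOn_ordinaryHypergeometric_neg_self (ha : |a| ≤ 1) :
    ContinuousOn (₂F₁ (-a) a 1 : ℝ → ℝ) (Icc 0 1) :=
  (continuousOn_ordinaryHypergeometric
    (summable_norm_ordinaryHypergeometricCoefficient_neg_self ha)).mono fun x hx ↦ by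
      rw [mem_closedBall_zero_iff, norm_eq_abs, abs_of_nonneg hx.1]; exact hx.2

theorem ordinaryHypergeometric_neg_self_one (ha : |a| ≤ 1) (ha0 : a ≠ 0) :
    ₂F₁ (-a) a 1 (1 : ℝ) = sin (π * a) / (π * a) := by
  have hsum := (summable_norm_ordinaryHypergeometricCoefficient_neg_self ha).of_norm.hasSum
  have hprod := (tendsto_add_atTop_iff_nat 1).2 hsum.tendsto_sum_nat
  simp only [sum_range_ordinaryHypergeometricCoefficient_neg_self] at hprod
  have hval : ₂F₁ (-a) a 1 (1 : ℝ) = ∑' n, ordinaryHypergeometricCoefficient (-a) a 1 n := by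
    rw [ordinaryHypergeometric_eq_tsum]
    simp [ordinaryHypergeometricCoefficient]
  rw [hval, eq_div_iff (mul_ne_zero pi_ne_zero ha0), mul_comm]
  exact tendsto_nhds_unique (hprod.const_mul (π * a)) (tendsto_euler_sin_prod a)

variable {x : ℝ}

theorem hasDerivAt_ordinaryHypergeometric_neg_self (a : ℝ) (hx : |x| < 1) :
    HasDerivAt (₂F₁ (-a) a 1 : ℝ → ℝ) (-a ^ 2 * ₂F₁ (1 - a) (1 + a) 2 x) x := by
  refine (hasDerivAt_ordinaryHypergeometric (-a) a 1 hx).congr_deriv ?_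
  rw [neg_add_eq_sub, add_comm a, one_add_one_eq_two]
  ring

theorem hasDerivAt_ordinaryHypergeometric_one_sub_one_add (a : ℝ) (hx : |x| < 1) :
    HasDerivAt (₂F₁ (1 - a) (1 + a) 2 : ℝ → ℝ)
      ((1 - a ^ 2) / 2 * (₂F₁ (1 - a) (1 + a) 3 x / (1 - x))) x := by
  refine (hasDerivAt_ordinaryHypergeometric (1 - a) (1 + a) 2 hx).congr_deriv ?_
  have hx1 : 1 - x ≠ 0 := (sub_pos.2 (abs_lt.1 hx).2).ne'
  have hthree : 1 - a + (1 + a) + 1 = 3 := by ring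
  rw [two_add_one_eq_three, ← one_sub_mul_ordinaryHypergeometric hthree
    (fun k ↦ by positivity) hx, mul_div_cancel_left₀ _ hx1]
  ring

theorem ordinaryHypergeometricCoefficient_two_sub_two_add_le (ha : |a| ≤ 2) (n : ℕ) :
    ordinaryHypergeometricCoefficient (2 - a) (2 + a) 3 n ≤ 2 * (n + 1) / (n + 2) := by
  obtain ⟨hneg, hle⟩ := abs_le.1 ha
  induction n with
  | zero => simp [ordinaryHypergeometricCoefficient_zero]
  | succ n ih =>
    have hratio : 0 ≤ (2 - a + n) * (2 + a + n) / ((3 + n) * (n + 1)) := by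
      have hn : (0 : ℝ) ≤ n := n.cast_nonneg
      exact div_nonneg (mul_nonneg (by linarith [hn]) (by linarith [hn])) (by positivity)
    rw [ordinaryHypergeometricCoefficient_succ]
    calc ordinaryHypergeometricCoefficient (2 - a) (2 + a) 3 n *
          ((2 - a + n) * (2 + a + n) / ((3 + n) * (n + 1)))
        ≤ 2 * (n + 1) / (n + 2) * ((n + 2) ^ 2 / ((3 + n) * (n + 1))) := by
          gcongr
          nlinarith [sq_nonneg a]
      _ = 2 * ((n + 1 : ℕ) + 1) / ((n + 1 : ℕ) + 2) := by
          push_cast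
          field_simp
          ring

theorem ordinaryHypergeometric_one_sub_one_add_three_le (ha : |a| ≤ 1) (hx : x ∈ Icc 0 1) :
    ₂F₁ (1 - a) (1 + a) 3 x ≤ 1 + x := by
  obtain ⟨hneg, hle⟩ := abs_le.1 ha
  have hsum (n : ℕ) :
      ∑ i ∈ Finset.range (n + 1), ordinaryHypergeometricCoefficient (1 - a) (1 + a) 3 i ≤ 2 := by
    rw [sum_range_ordinaryHypergeometricCoefficient n (by ring) fun k ↦ by positivity,
      sub_add_eq_add_sub, add_right_comm, one_add_one_eq_two]
    refine (ordinaryHypergeometricCoefficient_two_sub_two_add_le (ha.trans one_le_two) n).trans ?_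
    rw [div_le_iff₀ (by positivity)]
    linarith
  have hchord := tsum_mul_pow_le_add_mul (ordinaryHypergeometricCoefficient_nonneg
    (by linarith) (by linarith) zero_le_three) hsum hx.1 hx.2
  rw [ordinaryHypergeometricCoefficient_zero] at hchord
  rw [ordinaryHypergeometric_eq_tsum]
  simp only [smul_eq_mul]
  exact hchord.trans_eq (by ring)

end NegSelf

theorem strictConvexOn_of_hasDerivAt2_pos {D : Set ℝ} (hD : Convex ℝ D) {f f' f'' : ℝ → ℝ}
    (hf : ContinuousOn f D) (hf' : ∀ x ∈ interior D, HasDerivAt f (f' x) x)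
    (hf'' : ∀ x ∈ interior D, HasDerivAt f' (f'' x) x) (hpos : ∀ x ∈ interior D, 0 < f'' x) :
    StrictConvexOn ℝ D f := by
  have hmono : StrictMonoOn f' (interior D) := by
    refine strictMonoOn_of_hasDerivWithinAt_pos (f' := f'') hD.interior
      (HasDerivAt.continuousOn hf'') (fun x hx ↦ ?_) fun x hx ↦ ?_ <;>
      rw [interior_interior] at hx
    · exact (hf'' x hx).hasDerivWithinAt
    · exact hpos x hx
  exact (hmono.congr fun x hx ↦ (hf' x hx).deriv.symm).strictConvexOn_of_deriv hD hf

section HypOneSubRpow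

/-- The function `y ↦ F(-a, a; 1; 1 - y ^ q)`. With `y = x ^ c` and `q = d / c` it is
`F(-a, a; 1; 1 - x ^ d)`, and `hypOneSubRpow (1 / 2) 1` is the function it is compared with. -/
noncomputable def hypOneSubRpow (a q y : ℝ) : ℝ :=
  ₂F₁ (-a) a 1 (1 - y ^ q)

/-- The derivative of `hypOneSubRpow a q` on `(0, 1]`. -/
noncomputable def hypOneSubRpowDeriv (a q y : ℝ) : ℝ :=
  a ^ 2 * q * (y ^ (q - 1) * ₂F₁ (1 - a) (1 + a) 2 (1 - y ^ q))

/-- The second derivative of `hypOneSubRpow a q` at `y`, multiplied by `-y`: this factor removes the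
pole at `y = 0` and makes the values for `a = 1 / 2` and `q = 1` positive. -/
noncomputable def hypOneSubRpowCurvature (a q y : ℝ) : ℝ :=
  a ^ 2 * q * (y ^ (q - 1) * (q * (1 - a ^ 2) / 2 * ₂F₁ (1 - a) (1 + a) 3 (1 - y ^ q) -
    (q - 1) * ₂F₁ (1 - a) (1 + a) 2 (1 - y ^ q)))

variable {a q y : ℝ}

theorem one_sub_rpow_mem_Ico (hq : 0 ≤ q) (hy : y ∈ Ioc 0 1) : 1 - y ^ q ∈ Ico 0 1 :=
  ⟨sub_nonneg.2 (rpow_le_one hy.1.le hy.2 hq), sub_lt_self _ (rpow_pos_of_pos hy.1 q)⟩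

theorem abs_one_sub_rpow_lt_one (hq : 0 ≤ q) (hy : y ∈ Ioc 0 1) : |1 - y ^ q| < 1 := by
  obtain ⟨hnonneg, hlt⟩ := one_sub_rpow_mem_Ico hq hy
  rwa [abs_of_nonneg hnonneg]

theorem hasDerivAt_one_sub_rpow (q : ℝ) (hy : 0 < y) :
    HasDerivAt (fun z : ℝ ↦ 1 - z ^ q) (-(q * y ^ (q - 1))) y :=
  (hasDerivAt_rpow_const (Or.inl hy.ne')).const_sub 1

theorem hypOneSubRpow_one_right (a q : ℝ) : hypOneSubRpow a q 1 = 1 := by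
  rw [hypOneSubRpow, one_rpow, sub_self, ordinaryHypergeometric_zero]

theorem hypOneSubRpow_zero_right (ha : |a| ≤ 1) (ha0 : a ≠ 0) (hq : q ≠ 0) :
    hypOneSubRpow a q 0 = sin (π * a) / (π * a) := by
  rw [hypOneSubRpow, zero_rpow hq, sub_zero, ordinaryHypergeometric_neg_self_one ha ha0]

theorem hypOneSubRpowDeriv_one_right (a q : ℝ) : hypOneSubRpowDeriv a q 1 = a ^ 2 * q := by
  rw [hypOneSubRpowDeriv, one_rpow, one_rpow, sub_self, ordinaryHypergeometric_zero, mul_one,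
    mul_one]

theorem continuousOn_hypOneSubRpow (ha : |a| ≤ 1) (hq : 0 ≤ q) :
    ContinuousOn (hypOneSubRpow a q) (Icc 0 1) := by
  refine (continuousOn_ordinaryHypergeometric_neg_self ha).comp
    (continuous_const.sub (continuous_rpow_const hq)).continuousOn fun y hy ↦ ?_
  exact ⟨sub_nonneg.2 (rpow_le_one hy.1 hy.2 hq), sub_le_self _ (rpow_nonneg hy.1 q)⟩

theorem hasDerivAt_hypOneSubRpow (a : ℝ) (hq : 0 ≤ q) (hy : y ∈ Ioc 0 1) :
    HasDerivAt (hypOneSubRpow a q) (hypOneSubRpowDeriv a q y) y := by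
  refine ((hasDerivAt_ordinaryHypergeometric_neg_self a (abs_one_sub_rpow_lt_one hq hy)).comp y
    (hasDerivAt_one_sub_rpow q hy.1)).congr_deriv ?_
  rw [hypOneSubRpowDeriv]
  ring

theorem hasDerivAt_hypOneSubRpowDeriv (a : ℝ) (hq : 0 ≤ q) (hy : y ∈ Ioc 0 1) :
    HasDerivAt (hypOneSubRpowDeriv a q) (-hypOneSubRpowCurvature a q y / y) y := by
  have hF := (hasDerivAt_ordinaryHypergeometric_one_sub_one_add a
    (abs_one_sub_rpow_lt_one hq hy)).comp y (hasDerivAt_one_sub_rpow q hy.1)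
  have hpow : HasDerivAt (fun z : ℝ ↦ z ^ (q - 1)) ((q - 1) * y ^ (q - 1 - 1)) y :=
    hasDerivAt_rpow_const (Or.inl hy.1.ne')
  refine ((hpow.mul hF).const_mul (a ^ 2 * q)).congr_deriv ?_
  have hy0 : y ≠ 0 := hy.1.ne'
  have hyq : y ^ q = y ^ (q - 1) * y := by rw [← rpow_add_one hy0, sub_add_cancel]
  have hpos : y ^ (q - 1) ≠ 0 := (rpow_pos_of_pos hy.1 _).ne'
  rw [hypOneSubRpowCurvature, Function.comp_apply, rpow_sub_one hy0 (q - 1), sub_sub_cancel,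
    hyq]
  field_simp
  ring

theorem hypOneSubRpowCurvature_le (ha : |a| ≤ 1) (hq : 1 ≤ q) (hy : y ∈ Ioc 0 1) :
    hypOneSubRpowCurvature a q y ≤
      a ^ 2 * q * (1 - q / 2 - a ^ 2 * q / 2) *
        (y ^ (q - 1) * ₂F₁ (1 - a) (1 + a) 3 (1 - y ^ q)) := by
  obtain ⟨hneg, hle⟩ := abs_le.1 ha
  have h32 : ₂F₁ (1 - a) (1 + a) 3 (1 - y ^ q) ≤ ₂F₁ (1 - a) (1 + a) 2 (1 - y ^ q) :=
    ordinaryHypergeometric_le_of_le (by linarith) (by linarith) two_pos (by norm_num)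
      (one_sub_rpow_mem_Ico (by linarith) hy)
  have hypos : 0 ≤ y ^ (q - 1) := rpow_nonneg hy.1.le _
  calc hypOneSubRpowCurvature a q y
      ≤ a ^ 2 * q * (y ^ (q - 1) * (q * (1 - a ^ 2) / 2 * ₂F₁ (1 - a) (1 + a) 3 (1 - y ^ q) -
          (q - 1) * ₂F₁ (1 - a) (1 + a) 3 (1 - y ^ q))) := by
        rw [hypOneSubRpowCurvature]
        gcongr
    _ = _ := by ring

end HypOneSubRpow

section Estimates

theorem mul_two_sub_pow_six_lt {r : ℝ} (hr : r ∈ Icc 0 1) :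
    r * (2 - r ^ 6) < 15 / 11 * (1 + (1 - r ^ 5) / 4) := by
  have hpow : r ^ 5 ≤ r := pow_le_of_le_one hr.1 hr.2 (by norm_num)
  -- After `r ^ 5 ≤ r` it remains to show `0 < 75 - 103 * r + 44 * r ^ 7`, whose right side is
  -- smallest near `r = 5 / 6`.
  have htangent : 1 + 7 * (6 * r / 5 - 1) ≤ (6 * r / 5) ^ 7 := by
    have hbern := one_add_mul_le_pow (a := 6 * r / 5 - 1) (by linarith [hr.1]) 7
    rwa [add_sub_cancel, Nat.cast_ofNat] at hbern
  linarith [hr.1]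

theorem rpow_sub_one_mul_two_sub_rpow_lt {q y : ℝ} (hq : 6 / 5 ≤ q) (hy : y ∈ Ioo 0 1) :
    y ^ (q - 1) * (2 - y ^ q) < 15 / 11 * (1 + (1 - y) / 4) := by
  obtain ⟨hy0, hy1⟩ := hy
  have ht0 : 0 ≤ y ^ (q - 1) := rpow_nonneg hy0.le _
  have hyq : y ^ q = y ^ (q - 1) * y := by rw [← rpow_add_one hy0.ne', sub_add_cancel]
  have hle : y ^ (q - 1) ≤ y ^ (1 / 5 : ℝ) :=
    rpow_le_rpow_of_exponent_ge hy0 hy1.le (by linarith)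
  have hr1 : y ^ (1 / 5 : ℝ) ≤ 1 := rpow_le_one hy0.le hy1.le (by norm_num)
  have hr5 : (y ^ (1 / 5 : ℝ)) ^ 5 = y := by
    rw [← rpow_mul_natCast hy0.le]
    norm_num
  rw [hyq]
  generalize y ^ (q - 1) = t at *
  generalize y ^ (1 / 5 : ℝ) = r at *
  have hmono : t * (2 - t * y) ≤ r * (2 - r * y) := by
    have hsum : (r + t) * y ≤ 2 := by nlinarith
    linarith [mul_nonneg (sub_nonneg.2 hle) (sub_nonneg.2 hsum)]
  calc t * (2 - t * y) ≤ r * (2 - r * y) := hmono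
    _ = r * (2 - r ^ 6) := by rw [← hr5]; ring
    _ < 15 / 11 * (1 + (1 - r ^ 5) / 4) := mul_two_sub_pow_six_lt ⟨ht0.trans hle, hr1⟩
    _ = 15 / 11 * (1 + (1 - y) / 4) := by rw [hr5]

end Estimates

section Comparison

variable {a q y : ℝ}

theorem abs_le_one_of_sq_mul_le_one (hq : 1 ≤ q) (haq : a ^ 2 * q ≤ 1) : |a| ≤ 1 :=
  (sq_le_one_iff_abs_le_one a).1 ((le_mul_of_one_le_right (sq_nonneg a) hq).trans haq)

theorem le_hypOneSubRpowCurvature_one_half_one (hy : y ∈ Ioc 0 1) :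
    3 / 32 * (1 + (1 - y) / 4) ≤ hypOneSubRpowCurvature (1 / 2) 1 y := by
  have hx : 1 - y ∈ Ico 0 1 := by simpa using one_sub_rpow_mem_Ico zero_le_one hy
  have hF := one_add_mul_le_ordinaryHypergeometric (a := 1 - 1 / 2) (b := 1 + 1 / 2) (c := 3)
    (by norm_num) (by norm_num) zero_le_three hx
  rw [hypOneSubRpowCurvature, sub_self, rpow_zero, rpow_one]
  linarith

theorem hypOneSubRpowCurvature_lt (hq : 6 / 5 ≤ q) (haq : a ^ 2 * q ≤ 1 / 4)
    (hy : y ∈ Ioo 0 1) :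
    hypOneSubRpowCurvature a q y < 3 / 32 * (1 + (1 - y) / 4) := by
  have ha : |a| ≤ 1 := abs_le_one_of_sq_mul_le_one (q := q) (by linarith) (by linarith)
  obtain ⟨hneg, hle⟩ := abs_le.1 ha
  have hy' : y ∈ Ioc 0 1 := Ioo_subset_Ioc_self hy
  have hx : 1 - y ^ q ∈ Ico 0 1 := one_sub_rpow_mem_Ico (by linarith) hy'
  have hpow : 0 ≤ y ^ (q - 1) := rpow_nonneg hy.1.le _
  have hF : ₂F₁ (1 - a) (1 + a) 3 (1 - y ^ q) ≤ 2 - y ^ q := by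
    linarith [ordinaryHypergeometric_one_sub_one_add_three_le ha (Ico_subset_Icc_self hx)]
  have hF0 : 0 ≤ ₂F₁ (1 - a) (1 + a) 3 (1 - y ^ q) := by
    refine le_trans ?_ (one_add_mul_le_ordinaryHypergeometric (by linarith) (by linarith)
      zero_le_three hx)
    have hab : 0 ≤ (1 - a) * (1 + a) := mul_nonneg (by linarith) (by linarith)
    have hx0 := hx.1
    positivity
  -- `p * (2 / 5 - p / 2)` increases for `p ≤ 2 / 5`, and equals `11 / 160` at `p = 1 / 4`.
  have hconst : a ^ 2 * q * (1 - q / 2 - a ^ 2 * q / 2) ≤ 11 / 160 := by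
    calc a ^ 2 * q * (1 - q / 2 - a ^ 2 * q / 2)
        ≤ a ^ 2 * q * (1 - 6 / 5 / 2 - a ^ 2 * q / 2) := by gcongr
      _ ≤ 11 / 160 := by nlinarith
  calc hypOneSubRpowCurvature a q y
      ≤ a ^ 2 * q * (1 - q / 2 - a ^ 2 * q / 2) *
          (y ^ (q - 1) * ₂F₁ (1 - a) (1 + a) 3 (1 - y ^ q)) :=
        hypOneSubRpowCurvature_le ha (by linarith) hy'
    _ ≤ 11 / 160 * (y ^ (q - 1) * (2 - y ^ q)) := by gcongr
    _ < 11 / 160 * (15 / 11 * (1 + (1 - y) / 4)) := by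
        gcongr 11 / 160 * ?_
        exact rpow_sub_one_mul_two_sub_rpow_lt hq hy
    _ = 3 / 32 * (1 + (1 - y) / 4) := by ring

theorem strictConvexOn_hypOneSubRpow_sub (hq : 6 / 5 ≤ q) (haq : a ^ 2 * q ≤ 1 / 4) :
    StrictConvexOn ℝ (Icc 0 1) (hypOneSubRpow a q - hypOneSubRpow (1 / 2) 1) := by
  have hq0 : 0 ≤ q := by linarith
  have ha : |a| ≤ 1 := abs_le_one_of_sq_mul_le_one (q := q) (by linarith) (by linarith)
  have hhalf : |(1 / 2 : ℝ)| ≤ 1 := by norm_num [abs_le]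
  refine strictConvexOn_of_hasDerivAt2_pos
    (f' := hypOneSubRpowDeriv a q - hypOneSubRpowDeriv (1 / 2) 1)
    (f'' := fun y ↦ -hypOneSubRpowCurvature a q y / y - -hypOneSubRpowCurvature (1 / 2) 1 y / y)
    (convex_Icc 0 1)
    ((continuousOn_hypOneSubRpow ha hq0).sub (continuousOn_hypOneSubRpow hhalf zero_le_one))
    ?_ ?_ ?_ <;> rw [interior_Icc] <;> intro y hy
  · have hy' := Ioo_subset_Ioc_self hy
    exact (hasDerivAt_hypOneSubRpow a hq0 hy').sub
      (hasDerivAt_hypOneSubRpow (1 / 2) zero_le_one hy')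
  · have hy' := Ioo_subset_Ioc_self hy
    exact (hasDerivAt_hypOneSubRpowDeriv a hq0 hy').sub
      (hasDerivAt_hypOneSubRpowDeriv (1 / 2) zero_le_one hy')
  · have hlt := (hypOneSubRpowCurvature_lt hq haq hy).trans_le
      (le_hypOneSubRpowCurvature_one_half_one (Ioo_subset_Ioc_self hy))
    rw [← sub_div]
    exact div_pos (by linarith) hy.1

theorem add_mul_one_sub_lt_hypOneSubRpow (hq : 6 / 5 ≤ q) (haq : a ^ 2 * q ≤ 1 / 4)
    (hy : y ∈ Ico 0 1) :
    hypOneSubRpow (1 / 2) 1 y + (1 / 4 - a ^ 2 * q) * (1 - y) < hypOneSubRpow a q y := by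
  have hone : (1 : ℝ) ∈ Ioc 0 1 := right_mem_Ioc.2 one_pos
  have hderiv := (hasDerivAt_hypOneSubRpow a (by linarith : 0 ≤ q) hone).sub
    (hasDerivAt_hypOneSubRpow (1 / 2) zero_le_one hone)
  have hslope := (strictConvexOn_hypOneSubRpow_sub hq haq).slope_lt_of_hasDerivAt
    (Ico_subset_Icc_self hy) (right_mem_Icc.2 zero_le_one) hy.2 hderiv
  rw [slope_def_field, div_lt_iff₀ (sub_pos.2 hy.2)] at hslope
  simp only [Pi.sub_apply, hypOneSubRpow_one_right, hypOneSubRpowDeriv_one_right] at hslope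
  linarith

theorem hypOneSubRpow_lt_add_mul_one_sub (ha : a ≠ 0) (hq : 6 / 5 ≤ q)
    (haq : a ^ 2 * q ≤ 1 / 4) (hy : y ∈ Ioo 0 1) :
    hypOneSubRpow a q y <
      hypOneSubRpow (1 / 2) 1 y + (sin (π * a) / (π * a) - 2 / π) * (1 - y) := by
  have hchord := (strictConvexOn_hypOneSubRpow_sub hq haq).2 (left_mem_Icc.2 zero_le_one)
    (right_mem_Icc.2 zero_le_one) zero_ne_one (sub_pos.2 hy.2) hy.1 (sub_add_cancel 1 y)
  have hhalf : hypOneSubRpow (1 / 2) 1 0 = 2 / π := by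
    rw [hypOneSubRpow_zero_right (by norm_num [abs_le]) (by norm_num) one_ne_zero,
      mul_one_div, sin_pi_div_two, one_div_div]
  have hzero : hypOneSubRpow a q 0 = sin (π * a) / (π * a) :=
    hypOneSubRpow_zero_right (abs_le_one_of_sq_mul_le_one (q := q) (by linarith) (by linarith)) ha
      (by linarith)
  simp only [Pi.sub_apply, smul_eq_mul, mul_zero, mul_one, zero_add, hypOneSubRpow_one_right,
    sub_self, add_zero, hhalf, hzero] at hchord
  linarith

end Comparison

section Parameters

variable {c d δ : ℝ}

theorem hyp_one_sub_rpow_eq {x : ℝ} (a d : ℝ) (hc : c ≠ 0) (hx : 0 ≤ x) :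
    hyp (-a) a 1 (1 - x ^ d) = hypOneSubRpow a (d / c) (x ^ c) := by
  rw [hyp_eq_ordinaryHypergeometric, hypOneSubRpow, ← rpow_mul hx, mul_div_cancel₀ d hc]

theorem sq_half_add_mul_div_le (hc : 0 < c) (hd : 0 < d) (hδ : -(1 / 2) ≤ δ)
    (hδle : δ ≤ (√(c / d) - 1) / 2) : (1 / 2 + δ) ^ 2 * (d / c) ≤ 1 / 4 := by
  have hsq : (1 + 2 * δ) ^ 2 ≤ c / d := by
    rw [← sq_sqrt (div_nonneg hc.le hd.le)]
    gcongr <;> linarith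
  calc (1 / 2 + δ) ^ 2 * (d / c) = (1 + 2 * δ) ^ 2 * (d / c) / 4 := by ring
    _ ≤ c / d * (d / c) / 4 := by gcongr
    _ = 1 / 4 := by field_simp

theorem neg_div_mul_eq_quarter_sub (δ : ℝ) (hc : c ≠ 0) (hd : d ≠ 0) :
    -(d / c) * (δ ^ 2 + δ + 1 / 4 * (1 - c / d)) = 1 / 4 - (1 / 2 + δ) ^ 2 * (d / c) := by
  field_simp
  ring

theorem two_div_pi_mul_cos_div_sub_one (hδ : 1 + 2 * δ ≠ 0) :
    2 / π * (cos (π * δ) / (1 + 2 * δ) - 1) =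
      sin (π * (1 / 2 + δ)) / (π * (1 / 2 + δ)) - 2 / π := by
  have hsin : sin (π * (1 / 2 + δ)) = cos (π * δ) := by
    rw [← sin_pi_div_two_sub, ← sin_pi_sub]
    ring_nf
  rw [hsin]
  field_simp

end Parameters

theorem stmt16 (c d δ₃ : ℝ)
    (hc : 0 < c) (hd : 0 < d) (hcd : c / d ≤ 5 / 6)
    (hδ₃ : δ₃ = (Real.sqrt (c / d) - 1) / 2) :
    δ₃ < 0 ∧
      ∀ x ∈ Ioo (0:ℝ) 1, ∀ δ ∈ Ioc (-(1/2) : ℝ) δ₃,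
        0 ≤ -(d / c) * (δ ^ 2 + δ + (1/4) * (1 - c / d)) ∧
        hyp (-(1/2)) (1/2) 1 (1 - x ^ c) +
            (-(d / c) * (δ ^ 2 + δ + (1/4) * (1 - c / d))) * (1 - x ^ c)
          < hyp (-(1/2) - δ) (1/2 + δ) 1 (1 - x ^ d) ∧
        hyp (-(1/2) - δ) (1/2 + δ) 1 (1 - x ^ d)
          < hyp (-(1/2)) (1/2) 1 (1 - x ^ c) +
              ((2 / π) * (Real.cos (π * δ) / (1 + 2 * δ) - 1)) * (1 - x ^ c) := by
  subst hδ₃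
  have hsqrt : √(c / d) < 1 := (sqrt_lt' one_pos).2 (by linarith)
  refine ⟨by linarith, fun x ⟨hx0, hx1⟩ δ ⟨hδ, hδle⟩ ↦ ?_⟩
  have hy : x ^ c ∈ Ioo 0 1 := ⟨rpow_pos_of_pos hx0 c, rpow_lt_one hx0.le hx1 hc⟩
  have hq : 6 / 5 ≤ d / c := by
    rw [← one_div_div c d, le_one_div (by norm_num) (div_pos hc hd)]
    exact hcd.trans_eq (by norm_num)
  have haq : (1 / 2 + δ) ^ 2 * (d / c) ≤ 1 / 4 := sq_half_add_mul_div_le hc hd hδ.le hδle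
  have hC₆ := two_div_pi_mul_cos_div_sub_one (δ := δ) (by linarith)
  have hhalf := hyp_one_sub_rpow_eq (1 / 2) c hc.ne' hx0.le
  rw [div_self hc.ne'] at hhalf
  rw [neg_div_mul_eq_quarter_sub δ hc.ne' hd.ne', hC₆, ← neg_add', hhalf,
    hyp_one_sub_rpow_eq (1 / 2 + δ) d hc.ne' hx0.le]
  exact ⟨sub_nonneg.2 haq, add_mul_one_sub_lt_hypOneSubRpow hq haq (Ioo_subset_Ico_self hy),
    hypOneSubRpow_lt_add_mul_one_sub (by linarith) hq haq hy⟩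
end
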